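/- arXiv:1806.02183 — 8 statements merged into one kernel-verified Lean document; each statement's English description precedes it below -/
import Mathlib

section
/- Let q be a prime power and let D₁ = det[[x, x^q, x^{q³}],[y, y^q, y^{q³}],[z, z^q, z^{q³}]] and D₂ = det[[x, x^q, x^{q²}],[y, y^q, y^{q²}],[z, z^q, z^{q²}]] in 𝔽_q[x,y,z]. Then D₂ divides D₁ in the polynomial ring 𝔽_q[x,y,z]. -/
/-!
Write `q = p ^ n`. Any three elements `x, y, z` of a commutative ring of characteristic `p` are
roots of a common monic `q`-polynomial `T^{q³} - c T^{q²} - b T^q - a T` with coefficients in that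
ring (generically it is the product of all `T - v` with `v` in the `𝔽_q`-span of `x, y, z`).
Hence the last column of `D₁` is `a` times the first column of `D₂`, plus `b` times the second,
plus `c` times the third, and so `D₁ = c D₂`.

The `q`-polynomial is obtained by adjoining one root at a time: if `f` is a `q`-polynomial, then
`f(T)^q - f(w)^{q-1} f(T)` is again one, it vanishes wherever `f` does, and it vanishes at `w`.
-/

open MvPolynomial

/-- The determinant `D₁ = det [[x, x^q, x^{q³}], [y, y^q, y^{q³}], [z, z^q, z^{q³}]]`
over the finite field `𝔽_q` with `q = p^n`. -/
noncomputable def DGZ_D1 (p n : ℕ) [Fact p.Prime] : MvPolynomial (Fin 3) (GaloisField p n) :=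
  Matrix.det (Matrix.of fun i j : Fin 3 =>
    (X i : MvPolynomial (Fin 3) (GaloisField p n)) ^ (![1, p ^ n, (p ^ n) ^ 3] j))

/-- The determinant `D₂ = det [[x, x^q, x^{q²}], [y, y^q, y^{q²}], [z, z^q, z^{q²}]]`
over the finite field `𝔽_q` with `q = p^n`. -/
noncomputable def DGZ_D2 (p n : ℕ) [Fact p.Prime] : MvPolynomial (Fin 3) (GaloisField p n) :=
  Matrix.det (Matrix.of fun i j : Fin 3 =>
    (X i : MvPolynomial (Fin 3) (GaloisField p n)) ^ (![1, p ^ n, (p ^ n) ^ 2] j))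

/-- Three elements of a ring of characteristic `p` are roots of a common monic `q`-polynomial of
`q`-degree three, where `q = p ^ n`. -/
lemma exists_common_qPolynomial {R : Type*} [CommRing R] (p n : ℕ) [Fact p.Prime] [CharP R p]
    (x y z : R) : ∃ a b c : R, ∀ t, t = x ∨ t = y ∨ t = z →
      t ^ (p ^ n) ^ 3 = a * t + b * t ^ p ^ n + c * t ^ (p ^ n) ^ 2 := by
  have hq : p ^ n ≠ 0 := pow_ne_zero _ (Fact.out : p.Prime).ne_zero
  have hsub : ∀ u v : R, (u - v) ^ p ^ n = u ^ p ^ n - v ^ p ^ n := fun u v =>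
    sub_pow_char_pow u v n
  generalize p ^ n = q at *
  have hroot : ∀ w : R, w ^ q - w ^ (q - 1) * w = 0 := fun w => by
    rw [pow_sub_one_mul hq, sub_self]
  have h2 : ∀ t : R, (t ^ q) ^ q = t ^ q ^ 2 := fun t => by rw [← pow_mul, sq]
  have h3 : ∀ t : R, (t ^ q ^ 2) ^ q = t ^ q ^ 3 := fun t => by rw [← pow_mul, ← pow_succ]
  -- `f₁`, `f₂`, `f₃` successively acquire the roots `x`, `y`, `z`.
  let A := x ^ (q - 1)
  let f₁ : R → R := fun t => t ^ q - A * t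
  let B := f₁ y ^ (q - 1)
  let f₂ : R → R := fun t => f₁ t ^ q - B * f₁ t
  let C := f₂ z ^ (q - 1)
  let f₃ : R → R := fun t => f₂ t ^ q - C * f₂ t
  have h₁₂ : ∀ t, f₁ t = 0 → f₂ t = 0 := fun t ht => by simp [f₂, ht, hq]
  have h₂₃ : ∀ t, f₂ t = 0 → f₃ t = 0 := fun t ht => by simp [f₃, ht, hq]
  have e₂ : ∀ t, f₂ t = t ^ q ^ 2 - A ^ q * t ^ q - B * (t ^ q - A * t) := fun t => by
    simp only [f₂, f₁, hsub, mul_pow, h2]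
  have e₃ : ∀ t, f₃ t = t ^ q ^ 3 - (A ^ q) ^ q * t ^ q ^ 2
      - B ^ q * (t ^ q ^ 2 - A ^ q * t ^ q)
      - C * (t ^ q ^ 2 - A ^ q * t ^ q - B * (t ^ q - A * t)) := fun t => by
    simp only [f₃, e₂, hsub, mul_pow, h2 t, h3]
  refine ⟨C * B * A, -(B ^ q * A ^ q) - C * A ^ q - C * B, (A ^ q) ^ q + B ^ q + C, ?_⟩
  intro t ht
  have h0 : f₃ t = 0 := by
    rcases ht with rfl | rfl | rfl
    · exact h₂₃ _ (h₁₂ _ (hroot _))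
    · exact h₂₃ _ (hroot _)
    · exact hroot _
  rw [e₃] at h0
  linear_combination h0

/-- `D₂` divides `D₁` in `𝔽_q[x, y, z]`. -/
theorem DGZ_D2_dvd_D1 (p n : ℕ) [Fact p.Prime] (hn : 0 < n) :
    DGZ_D2 p n ∣ DGZ_D1 p n := by
  obtain ⟨a, b, c, h⟩ := exists_common_qPolynomial p n
    (X 0 : MvPolynomial (Fin 3) (GaloisField p n)) (X 1) (X 2)
  refine ⟨c, ?_⟩
  have hx := h (X 0) (by simp)
  have hy := h (X 1) (by simp)
  have hz := h (X 2) (by simp)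
  simp only [DGZ_D1, DGZ_D2, Matrix.det_fin_three, Matrix.of_apply, Matrix.cons_val, pow_one]
  rw [hx, hy, hz]
  ring
end

section
/- Let q be a prime power and let F = D₁/D₂ ∈ 𝔽_q[x,y,z], where D₁ = det[[x, x^q, x^{q³}],[y, y^q, y^{q³}],[z, z^q, z^{q³}]] and D₂ = det[[x, x^q, x^{q²}],[y, y^q, y^{q²}],[z, z^q, z^{q²}]]. Then F is a homogeneous polynomial of degree q³ − q². -/
/-!
The determinants `D₁` and `D₂` are alternants `det (X i ^ e j)`. Every term of the Leibniz
expansion of such a determinant has degree `∑ j, e j`, so `D₁` and `D₂` are homogeneous of degrees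
`q³ + q + 1` and `q² + q + 1`. Since `q > 1`, the exponents `1, q, q²` are distinct, so the diagonal
monomial of `D₂` does not cancel and `D₂ ≠ 0`. Taking the component of degree `q³ + q + 1` in
`D₂ * F = D₁` gives `D₂ * G = D₁ = D₂ * F`, where `G` is the component of `F` of degree
`q³ - q²`; cancelling `D₂` yields `F = G`.
-/

open MvPolynomial

theorem alternant_isHomogeneous {R : Type*} [CommRing R] (e : Fin 3 → ℕ) :
    (Matrix.det (Matrix.of fun i j : Fin 3 =>
      (X i : MvPolynomial (Fin 3) R) ^ e j)).IsHomogeneous (∑ j, e j) := by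
  rw [Matrix.det_apply]
  refine IsHomogeneous.sum _ _ _ fun σ _ => ?_
  refine Submodule.smul_of_tower_mem (homogeneousSubmodule (Fin 3) R (∑ j, e j)) _ ?_
  exact IsHomogeneous.prod _ _ _ fun i _ => isHomogeneous_X_pow _ _

/-- The coefficient of the diagonal monomial `∏ X i ^ e i` in the alternant is `1`, because only
the identity permutation contributes to it. -/
theorem alternant_ne_zero {R : Type*} [CommRing R] [Nontrivial R] (e : Fin 3 → ℕ)
    (he : Function.Injective e) :
    Matrix.det (Matrix.of fun i j : Fin 3 => (X i : MvPolynomial (Fin 3) R) ^ e j) ≠ 0 := by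
  intro h
  have h2 := congrArg (coeff (Finsupp.equivFunOnFinite.symm e)) h
  have key : ∀ σ : Equiv.Perm (Fin 3), ∏ i, (X (σ i) : MvPolynomial (Fin 3) R) ^ e i =
      monomial (Finsupp.equivFunOnFinite.symm fun i => e (σ.symm i)) 1 := by
    intro σ
    rw [monomial_eq, Finsupp.prod_fintype _ _ (by simp)]
    simpa using Equiv.prod_comp σ fun k => (X k : MvPolynomial (Fin 3) R) ^ e (σ.symm k)
  simp only [Matrix.det_apply, Matrix.of_apply, key, coeff_sum, coeff_zero] at h2
  rw [Finset.sum_eq_single 1] at h2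
  · simp [← Equiv.Perm.inv_def] at h2
  · intro σ _ hσ
    have hne : (Finsupp.equivFunOnFinite.symm fun i => e (σ.symm i)) ≠
        Finsupp.equivFunOnFinite.symm e := by
      intro hh
      apply hσ
      ext1 i
      have := congrFun (Finsupp.equivFunOnFinite.symm.injective hh) (σ i)
      simpa using (he this).symm
    rw [Units.smul_def, coeff_smul, coeff_monomial, if_neg hne, smul_zero]
  · simp

attribute [local instance] MvPolynomial.gradedAlgebra in
theorem isHomogeneous_of_mul_left {R : Type*} [CommRing R] [IsDomain R]
    {A B F : MvPolynomial (Fin 3) R} {c d : ℕ} (hA : A.IsHomogeneous c) (hA0 : A ≠ 0)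
    (hB : B.IsHomogeneous (c + d)) (h : A * F = B) : F.IsHomogeneous d := by
  have h1 := DirectSum.coe_decompose_mul_add_of_left_mem (homogeneousSubmodule (Fin 3) R)
    (b := F) (j := d) hA
  rw [h, DirectSum.decompose_of_mem_same _ hB, ← h] at h1
  rw [mul_left_cancel₀ hA0 h1]
  exact (DirectSum.decompose (homogeneousSubmodule (Fin 3) R) F d).2

/-- The polynomial quotient `F = D₁ / D₂` is homogeneous of degree `q³ - q²`. -/
theorem DGZ_F_isHomogeneous (p n : ℕ) [Fact p.Prime] (hn : 0 < n)
    (F : MvPolynomial (Fin 3) (GaloisField p n)) (hF : DGZ_D2 p n * F = DGZ_D1 p n) :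
    F.IsHomogeneous ((p ^ n) ^ 3 - (p ^ n) ^ 2) := by
  have hq : 1 < p ^ n := Nat.one_lt_pow hn.ne' (Fact.out : p.Prime).one_lt
  have hlt : p ^ n < (p ^ n) ^ 2 := by nlinarith
  have hle : (p ^ n) ^ 2 ≤ (p ^ n) ^ 3 := Nat.pow_le_pow_right hq.le (by norm_num)
  refine isHomogeneous_of_mul_left (alternant_isHomogeneous ![1, p ^ n, (p ^ n) ^ 2])
    (alternant_ne_zero _ ?_) ?_ hF
  · clear hF hle
    generalize p ^ n = q at hq hlt ⊢
    intro i j hij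
    fin_cases i <;> fin_cases j <;> simp at hij ⊢ <;> omega
  · have h := alternant_isHomogeneous (R := GaloisField p n) ![1, p ^ n, (p ^ n) ^ 3]
    convert h using 1
    · rfl
    simp [Fin.sum_univ_three]
    omega
end

section
/- Let q be a prime power and let F = D₁/D₂ ∈ 𝔽_q[x,y,z] be the defining polynomial of the Dickson–Guralnick–Zieve curve. Then F, regarded as a polynomial over an algebraic closure k = 𝔽̄_q, is irreducible in k[x,y,z]. -/
/-!
Write `M = x y^q - x^q y`, `c = x^{q(q-1)} + (y^q - x^{q-1} y)^{q-1}` and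
`L = z^{q²} - c z^q + M^{q-1} z`. As a polynomial in `z`, `L` is `q`-additive and vanishes at `x` and
`y`, which gives `D₂ = M L` (`det₂_eq`) and `D₁ = D₂ F` with `F = L^{q-1} + c^q` (`det₁_eq`). So the
quotient is the explicit polynomial `dgzF`, and the task is to show that it is irreducible over an
algebraically closed field `K` (`dgzF_irreducible`).

Suppose `F = G H` with `G`, `H` not units. Since `F` is homogeneous, both factors vanish at the
origin (`isUnit_of_mul_eq`), and since `(G, H)` has height at most two, they also share a zero
`P = (a, b, e) ≠ 0` (`exists_common_zero`). There are two cases.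

* `M(a, b) ≠ 0` (`Polynomial.dgzM_eq_zero_of_zero`). All partial derivatives of `F` vanish at `P`, and
  the one along `z` is `-L^{q-2} M^{q-1}`, so `L(P) = 0`, whence `c(a, b) = 0`. Then
  `e = α a + β b` with `α, β` fixed by the `q`-Frobenius (`exists_frob_fixed`). In the coordinates
  `t = y - b`, `s = z - α a - β y` on the plane `x = a`, the curve `F = 0` looks to lowest weighted
  order like `u s^{q-1} + v t^q` with `u, v ≠ 0`. As `q - 1` and `q` are coprime, it has a single
  branch at `P`, so at most one of `G`, `H` vanishes there. Concretely, if `G`, `H` have orders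
  `i`, `i'` on `t = 0` and `j`, `j'` on `s = 0`, then `i + i' ≤ q - 1` and `j + j' ≤ q`, while
  comparing with the pencil `t = u T^{q-1}`, `s = (1 - u) T^q` shows
  `q (q - 1) ≤ w + w'` for the generic orders `w ≤ min (q i) ((q-1) j)`,
  `w' ≤ min (q i') ((q-1) j')`. All inequalities are then equalities, so `q i = (q - 1) j`, and
  `q ∣ j` contradicts `0 < j < q`.
* `M` vanishes on every pair of coordinates of `P` (by the symmetry of `F`). Then `P` is proportional
  to an `𝔽_q`-rational point, and `F` does not vanish there (`dgzF_ne_zero`).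
-/

open MvPolynomial

/-! ### The closed form of `D₁ / D₂` -/

section
variable {R : Type*} [CommRing R]

/-- The form `c = a^{q(q-1)} + (b^q - a^{q-1} b)^{q-1}` of degree `q(q-1)`; it equals
`(a b^{q²} - a^{q²} b) / (a b^q - a^q b)` when `q` is a power of the characteristic. -/
def dgzC (q : ℕ) (a b : R) : R := a ^ (q * (q - 1)) + (b ^ q - a ^ (q - 1) * b) ^ (q - 1)

/-- The Moore determinant `M = a b^q - a^q b` of two elements. -/
def dgzM (q : ℕ) (a b : R) : R := a * b ^ q - a ^ q * b

/-- The `q`-additive polynomial `L = e^{q²} - c e^q + M^{q-1} e` in `e` with coefficients depending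
on `a` and `b`: its zeros are the `𝔽_q`-combinations of `a` and `b` when `M ≠ 0`. -/
def dgzL (q : ℕ) (a b e : R) : R :=
  e ^ (q ^ 2) - dgzC q a b * e ^ q + dgzM q a b ^ (q - 1) * e

/-- The form `F = L^{q-1} + c^q` of degree `q³ - q²`, which is the quotient `D₁ / D₂`
by `det₁_eq`. -/
def dgzF (q : ℕ) (a b e : R) : R := dgzL q a b e ^ (q - 1) + dgzC q a b ^ q

/-- The exponent `q` is at least two and `x ↦ x ^ q` is additive on `R`. This is all that is needed
of `q` in most of the argument, which therefore does not mention the characteristic. -/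
def FrobAdd (q : ℕ) (R : Type*) [CommRing R] : Prop :=
  2 ≤ q ∧ ∀ x y : R, (x + y) ^ q = x ^ q + y ^ q

theorem FrobAdd.sub {q : ℕ} (h : FrobAdd q R) (x y : R) : (x - y) ^ q = x ^ q - y ^ q := by
  have := h.2 (x - y) y
  rw [sub_add_cancel] at this
  rw [this]; ring

theorem FrobAdd.of_charP (p n : ℕ) [Fact p.Prime] [CharP R p] (hn : 0 < n) :
    FrobAdd (p ^ n) R :=
  ⟨(Fact.out : p.Prime).two_le.trans (Nat.le_self_pow hn.ne' p), fun _ _ => add_pow_char_pow ..⟩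

theorem dgzL_self_left {q : ℕ} (h : FrobAdd q R) (a b : R) : dgzL q a b a = 0 := by
  obtain ⟨r, rfl⟩ : ∃ r, q = r + 1 := ⟨q - 1, by have := h.1; omega⟩
  have : dgzM (r + 1) a b = a * (b ^ (r + 1) - a ^ r * b) := by unfold dgzM; ring
  unfold dgzL
  rw [this]
  simp only [dgzC, Nat.add_sub_cancel]
  generalize b ^ (r + 1) - a ^ r * b = N
  ring

theorem dgzL_self_right {q : ℕ} (h : FrobAdd q R) (a b : R) : dgzL q a b b = 0 := by
  have hs := h.sub (b ^ q) (a ^ (q - 1) * b)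
  obtain ⟨r, rfl⟩ : ∃ r, q = r + 1 := ⟨q - 1, by have := h.1; omega⟩
  have : dgzM (r + 1) a b = a * (b ^ (r + 1) - a ^ r * b) := by unfold dgzM; ring
  unfold dgzL
  rw [this]
  simp only [dgzC, Nat.add_sub_cancel] at hs ⊢
  have e1 : b ^ ((r + 1) ^ 2) = (b ^ (r + 1)) ^ (r + 1) := by rw [← pow_mul, sq]
  have e2 : (b ^ (r + 1) - a ^ r * b) ^ (r + 1)
    = (b ^ (r + 1) - a ^ r * b) ^ r * (b ^ (r + 1) - a ^ r * b) := pow_succ _ _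
  rw [mul_pow]
  generalize hN : (b ^ (r + 1) - a ^ r * b) ^ r = N at *
  rw [e1]
  rw [mul_pow, ← pow_mul] at hs
  linear_combination e2 - hs

theorem dgzL_add {q : ℕ} (h : FrobAdd q R) (a b e e' : R) :
    dgzL q a b (e + e') = dgzL q a b e + dgzL q a b e' := by
  unfold dgzL
  rw [sq, pow_mul, pow_mul, pow_mul, h.2, h.2]
  ring

theorem dgzL_mul {q : ℕ} (a b e t : R) (ht : t ^ q = t) :
    dgzL q a b (t * e) = t * dgzL q a b e := by
  unfold dgzL
  rw [sq, pow_mul, pow_mul, mul_pow, ht, mul_pow, ht]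
  ring

/-- A zero of `L` satisfies a two-step linear recursion under Frobenius. -/
theorem pow_sq_eq {q : ℕ} {a b x : R} (hx : dgzL q a b x = 0) :
    (x ^ q) ^ q = dgzC q a b * x ^ q - dgzM q a b ^ (q - 1) * x := by
  unfold dgzL at hx
  rw [sq, pow_mul] at hx
  linear_combination hx

/-- The determinant with rows `(t, t^q, t^{q²})` for `t = a, b, e`. -/
def det₂ (q : ℕ) (a b e : R) : R :=
  (Matrix.of fun i j : Fin 3 => ((![a, b, e] : Fin 3 → R) i) ^ (![1, q, q ^ 2] j : ℕ)).det

/-- The determinant with rows `(t, t^q, t^{q³})` for `t = a, b, e`. -/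
def det₁ (q : ℕ) (a b e : R) : R :=
  (Matrix.of fun i j : Fin 3 => ((![a, b, e] : Fin 3 → R) i) ^ (![1, q, q ^ 3] j : ℕ)).det

/-- Modulo the recursion for `a` and `b`, the last column of `det₂` is a combination of the first two
except in the last row, where it leaves `L`. -/
theorem det₂_eq {q : ℕ} (h : FrobAdd q R) (a b e : R) :
    det₂ q a b e = dgzM q a b * dgzL q a b e := by
  have ha := pow_sq_eq (dgzL_self_left h a b)
  have hb := pow_sq_eq (dgzL_self_right h a b)
  unfold det₂ dgzL
  simp [Matrix.det_fin_three]
  rw [sq, pow_mul, pow_mul, pow_mul, ha, hb]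
  generalize dgzM q a b ^ (q - 1) = m
  unfold dgzM
  ring

/-- Applying Frobenius to the recursion, the last column of `det₁` is reduced to the one of `det₂`
scaled by `c^q`, plus a multiple of the column `(t^q)`, plus `L^q` in the last row. -/
theorem det₁_eq {q : ℕ} (h : FrobAdd q R) (a b e : R) :
    det₁ q a b e = det₂ q a b e * dgzF q a b e := by
  rw [det₂_eq h]
  have ha := pow_sq_eq (dgzL_self_left h a b)
  have hb := pow_sq_eq (dgzL_self_right h a b)
  have key : dgzL q a b e * dgzF q a b e
      = dgzL q a b e ^ q + dgzC q a b ^ q * dgzL q a b e := by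
    obtain ⟨r, rfl⟩ : ∃ r, q = r + 1 := ⟨q - 1, by have := h.1; omega⟩
    simp only [dgzF, Nat.add_sub_cancel]; ring
  have key2 : dgzL q a b e ^ q = ((e ^ q) ^ q) ^ q - dgzC q a b ^ q * (e ^ q) ^ q
      + (dgzM q a b ^ (q - 1)) ^ q * e ^ q := by
    unfold dgzL
    rw [h.2, h.sub, mul_pow, mul_pow, sq, pow_mul]
  have cube : ∀ x : R, x ^ q ^ 3 = ((x ^ q) ^ q) ^ q := fun x => by
    rw [← pow_mul, ← pow_mul]; ring_nf
  have ha' : ((a ^ q) ^ q) ^ q = dgzC q a b ^ q * (a ^ q) ^ q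
      - (dgzM q a b ^ (q - 1)) ^ q * a ^ q := by
    conv_lhs => rw [ha, h.sub, mul_pow, mul_pow]
  have hb' : ((b ^ q) ^ q) ^ q = dgzC q a b ^ q * (b ^ q) ^ q
      - (dgzM q a b ^ (q - 1)) ^ q * b ^ q := by
    conv_lhs => rw [hb, h.sub, mul_pow, mul_pow]
  rw [mul_assoc, key, key2]
  unfold det₁ dgzL
  simp [Matrix.det_fin_three]
  rw [cube, cube, cube, ha', hb', ha, hb, sq, pow_mul]
  generalize dgzM q a b ^ (q - 1) = m
  unfold dgzM
  ring
end

/-! ### Two surfaces through the origin meet elsewhere -/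

/-- Two polynomials in three variables that vanish at the origin have another common zero: otherwise,
by the Nullstellensatz, a minimal prime over `(G, H)` contains the maximal ideal of the origin, of
height three, which contradicts Krull's height theorem. -/
theorem exists_common_zero {K : Type*} [Field K] [IsAlgClosed K] (G H : MvPolynomial (Fin 3) K)
    (hG : eval 0 G = 0) (hH : eval 0 H = 0) :
    ∃ P : Fin 3 → K, P ≠ 0 ∧ eval P G = 0 ∧ eval P H = 0 := by
  by_contra! hcon
  -- the linear primes `(X₀, …, X_{k-1})`, as kernels of coordinate projections
  let a : ℕ → (MvPolynomial (Fin 3) K →ₐ[K] MvPolynomial (Fin 3) K) := fun k =>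
    aeval fun i : Fin 3 => if i.val < k then 0 else X i
  let 𝔭 : ℕ → Ideal (MvPolynomial (Fin 3) K) := fun k => RingHom.ker (a k)
  have hprime : ∀ k, (𝔭 k).IsPrime := fun k => RingHom.ker_isPrime _
  have hcomp : ∀ k, (a (k + 1)).comp (a k) = a (k + 1) := by
    intro k
    ext i : 1
    by_cases hi : i.val < k
    · simp [a, hi, show i.val ≤ k from hi.le]
    · simp [a, hi]
  have hlt : ∀ k, k < 3 → 𝔭 k < 𝔭 (k + 1) := by
    intro k hk
    refine lt_of_le_of_ne (fun f hf => ?_) fun heq => ?_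
    · have hf' : a k f = 0 := hf
      change a (k + 1) f = 0
      rw [← hcomp k, AlgHom.comp_apply, hf', map_zero]
    · have h1 : (X ⟨k, hk⟩ : MvPolynomial (Fin 3) K) ∈ 𝔭 (k + 1) := by
        change a (k + 1) _ = 0
        simp [a]
      rw [← heq] at h1
      have h2 : a k (X ⟨k, hk⟩) = 0 := h1
      simp [a] at h2
  have hheight : ∀ k : ℕ, k ≤ 3 → (k : ℕ∞) ≤ (𝔭 k).height := by
    intro k
    induction k with
    | zero => simp
    | succ k ih =>
      intro hk
      have := hprime k
      have := hprime (k + 1)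
      push_cast
      exact (add_le_add_left (ih (by omega)) 1).trans
        (Ideal.height_add_one_le_of_lt_of_isPrime (hlt k (by omega)))
  have h3 : ∀ f, f ∈ 𝔭 3 ↔ eval 0 f = 0 := by
    intro f
    have : a 3 = (Algebra.ofId K (MvPolynomial (Fin 3) K)).comp (aeval (0 : Fin 3 → K)) := by
      ext i : 1
      simp [a]
    change a 3 f = 0 ↔ _
    rw [this, AlgHom.comp_apply, Algebra.ofId_apply, algebraMap_eq, C_eq_zero]
    rfl
  have := hprime 3
  have hle : Ideal.span {G, H} ≤ 𝔭 3 := by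
    rw [Ideal.span_le]
    rintro f (rfl | rfl)
    exacts [(h3 _).2 hG, (h3 _).2 hH]
  obtain ⟨Q, hQ, hQle⟩ := Ideal.exists_minimalPrimes_le hle
  have hQp : Q.IsPrime := hQ.1.1
  have hGQ : Ideal.span {G, H} ≤ Q := hQ.1.2
  have hQ2 : Q.height ≤ 2 := by
    refine (Ideal.height_le_spanRank_toENat_of_mem_minimalPrimes _ _ hQ).trans ?_
    have : (Ideal.span {G, H}).spanRank ≤ 2 := by
      refine (Submodule.spanRank_span_le_card _).trans ?_
      exact (Cardinal.mk_insert_le).trans (by rw [Cardinal.mk_singleton]; norm_num)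
    simpa using Cardinal.toENat.monotone' this
  have hQ3 : 𝔭 3 ≤ Q := by
    rw [← IsPrime.vanishingIdeal_zeroLocus (K := K) Q]
    intro f hf
    rw [mem_vanishingIdeal_iff]
    intro x hx
    have hxG : eval x G = 0 := hx _ (hGQ (Ideal.subset_span (by simp)))
    have hxH : eval x H = 0 := hx _ (hGQ (Ideal.subset_span (by simp)))
    have hx0 : x = 0 := by
      by_contra hne
      exact hcon x hne hxG hxH
    subst hx0
    exact (h3 f).1 hf
  have := (hheight 3 le_rfl).trans ((Ideal.height_mono hQ3).trans hQ2)
  norm_num at this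

/-! ### Homogeneity, symmetry and rational points -/

section
variable {R S : Type*} [CommRing R] [CommRing S]

theorem map_dgzC (φ : R →+* S) (q : ℕ) (a b : R) : φ (dgzC q a b) = dgzC q (φ a) (φ b) := by
  simp [dgzC]

theorem map_dgzM (φ : R →+* S) (q : ℕ) (a b : R) : φ (dgzM q a b) = dgzM q (φ a) (φ b) := by
  simp [dgzM]

theorem map_dgzL (φ : R →+* S) (q : ℕ) (a b e : R) :
    φ (dgzL q a b e) = dgzL q (φ a) (φ b) (φ e) := by
  simp [dgzL, map_dgzC, map_dgzM]

theorem map_dgzF (φ : R →+* S) (q : ℕ) (a b e : R) :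
    φ (dgzF q a b e) = dgzF q (φ a) (φ b) (φ e) := by
  simp [dgzF, map_dgzC, map_dgzL]

/-- `F` is homogeneous of degree `q²(q-1)`. -/
theorem dgzF_scale {q : ℕ} (hq : 2 ≤ q) (s a b e : R) :
    dgzF q (s * a) (s * b) (s * e) = s ^ (q ^ 2 * (q - 1)) * dgzF q a b e := by
  obtain ⟨r, rfl⟩ : ∃ r, q = r + 1 := ⟨q - 1, by omega⟩
  have hC : dgzC (r + 1) (s * a) (s * b) = s ^ ((r + 1) * r) * dgzC (r + 1) a b := by
    have : (s * b) ^ (r + 1) - (s * a) ^ r * (s * b)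
        = s ^ (r + 1) * (b ^ (r + 1) - a ^ r * b) := by
      rw [mul_pow, mul_pow]; ring
    simp only [dgzC, Nat.add_sub_cancel]
    rw [this, mul_pow, mul_pow, ← pow_mul]; ring
  have hM : dgzM (r + 1) (s * a) (s * b) = s ^ (r + 2) * dgzM (r + 1) a b := by
    unfold dgzM; rw [mul_pow, mul_pow]; ring
  have hL : dgzL (r + 1) (s * a) (s * b) (s * e) = s ^ ((r + 1) ^ 2) * dgzL (r + 1) a b e := by
    unfold dgzL
    rw [hC, hM]
    simp only [mul_pow, Nat.add_sub_cancel, ← pow_mul]; ring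
  unfold dgzF
  rw [hL, hC]
  simp only [mul_pow, Nat.add_sub_cancel, ← pow_mul]; ring

theorem det₂_swap₀₁ (q : ℕ) (a b e : R) : det₂ q b a e = -det₂ q a b e := by
  simp [det₂, Matrix.det_fin_three]; ring

theorem det₂_swap₁₂ (q : ℕ) (a b e : R) : det₂ q a e b = -det₂ q a b e := by
  simp [det₂, Matrix.det_fin_three]; ring

theorem det₁_swap₀₁ (q : ℕ) (a b e : R) : det₁ q b a e = -det₁ q a b e := by
  simp [det₁, Matrix.det_fin_three]; ring

theorem det₁_swap₁₂ (q : ℕ) (a b e : R) : det₁ q a e b = -det₁ q a b e := by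
  simp [det₁, Matrix.det_fin_three]; ring

/-- `F` is symmetric in its arguments, as a quotient of two alternating determinants; the hypothesis
that the denominator is nonzero allows cancelling it. -/
theorem dgzF_swap₀₁ [IsDomain R] {q : ℕ} (h : FrobAdd q R) {a b e : R} (h0 : det₂ q a b e ≠ 0) :
    dgzF q b a e = dgzF q a b e := by
  have h1 := det₁_eq h a b e
  have h2 := det₁_eq h b a e
  rw [det₁_swap₀₁, det₂_swap₀₁, h1, neg_mul, neg_inj] at h2
  exact (mul_left_cancel₀ h0 h2).symm

theorem dgzF_swap₁₂ [IsDomain R] {q : ℕ} (h : FrobAdd q R) {a b e : R} (h0 : det₂ q a b e ≠ 0) :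
    dgzF q a e b = dgzF q a b e := by
  have h1 := det₁_eq h a b e
  have h2 := det₁_eq h a e b
  rw [det₁_swap₁₂, det₂_swap₁₂, h1, neg_mul, neg_inj] at h2
  exact (mul_left_cancel₀ h0 h2).symm

theorem dgzF_swap₀₂ [IsDomain R] {q : ℕ} (h : FrobAdd q R) {a b e : R} (h0 : det₂ q a b e ≠ 0) :
    dgzF q e b a = dgzF q a b e := by
  have h1 : det₂ q b a e ≠ 0 := by rwa [det₂_swap₀₁, neg_ne_zero]
  have h2 : det₂ q b e a ≠ 0 := by rwa [det₂_swap₁₂, neg_ne_zero]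
  rw [dgzF_swap₀₁ h h2, dgzF_swap₁₂ h h1, dgzF_swap₀₁ h h0]

/-- `F` does not vanish at points proportional to an `𝔽_q`-rational one: there `M`, `L` and
`b^q - a^{q-1} b` are zero, so `F = a^{q²(q-1)}`. -/
theorem dgzF_ne_zero [IsDomain R] {q : ℕ} (h : FrobAdd q R) {a b e : R} (ha : a ≠ 0)
    (hb : dgzM q a b = 0) (he : dgzM q a e = 0) : dgzF q a b e ≠ 0 := by
  have hs := h.sub (e ^ q) (a ^ (q - 1) * e)
  obtain ⟨r, rfl⟩ : ∃ r, q = r + 2 := ⟨q - 2, by have := h.1; omega⟩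
  simp only [show r + 2 - 1 = r + 1 by omega] at hs
  have key : ∀ x : R, dgzM (r + 2) a x = 0 → x ^ (r + 2) - a ^ (r + 1) * x = 0 := by
    intro x hx
    have : a * (x ^ (r + 2) - a ^ (r + 1) * x) = 0 := by rw [← hx]; unfold dgzM; ring
    exact (mul_eq_zero.1 this).resolve_left ha
  have hC : dgzC (r + 2) a b = a ^ ((r + 2) * (r + 1)) := by
    simp [dgzC, key b hb]
  have hL : dgzL (r + 2) a b e = 0 := by
    unfold dgzL
    rw [hb, hC, sq, pow_mul]
    rw [key e he, mul_pow, zero_pow (by omega)] at hs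
    rw [mul_comm (r + 2) (r + 1), pow_mul a, zero_pow (by omega), zero_mul, add_zero]
    exact hs.symm
  unfold dgzF
  rw [hL, hC]
  simp [ha]
end

theorem det₂_X_ne_zero {K : Type*} [Field K] {q : ℕ} (h : FrobAdd q (MvPolynomial (Fin 3) K)) :
    det₂ q (X 0 : MvPolynomial (Fin 3) K) (X 1) (X 2) ≠ 0 := by
  rw [det₂_eq h]
  have hq := h.1
  refine mul_ne_zero (fun h0 => ?_) fun h0 => ?_
  · have := congrArg (aeval (R := K) ![(1 : Polynomial K), Polynomial.X, 0]).toRingHom h0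
    rw [map_dgzM] at this
    refine FiniteField.X_pow_card_sub_X_ne_zero K (show 1 < q from hq) ?_
    simpa [dgzM] using this
  · have := congrArg (eval ![(0 : K), 0, 1]) h0
    rw [map_dgzL] at this
    simp [dgzL, dgzM, dgzC, show q ≠ 0 by omega, show q - 1 ≠ 0 by omega,
      zero_pow (show q - 1 ≠ 0 by omega)] at this

/-- A factor of `F` with nonzero constant term is constant. The substitution `X_i ↦ T X_i` turns `F`
into `T^d F`, so both factors become monomials in `T`; the constant term of `G` forces exponent
zero. -/
theorem isUnit_of_mul_eq {K : Type*} [Field K] {q : ℕ} (h : FrobAdd q (MvPolynomial (Fin 3) K))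
    {G H : MvPolynomial (Fin 3) K} (hGH : G * H = dgzF q (X 0) (X 1) (X 2))
    (hG : eval 0 G ≠ 0) : IsUnit G := by
  have hF : dgzF q (X 0 : MvPolynomial (Fin 3) K) (X 1) (X 2) ≠ 0 := fun h0 => by
    have := congrArg (eval ![(1 : K), 0, 0]) h0
    rw [map_dgzF] at this
    have hq := h.1
    simp [dgzF, dgzL, dgzM, dgzC, show q ≠ 0 by omega,
      zero_pow (show q - 1 ≠ 0 by omega)] at this
  let Φ : MvPolynomial (Fin 3) K →ₐ[K] Polynomial (MvPolynomial (Fin 3) K) :=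
    aeval fun i => Polynomial.X * Polynomial.C (X i)
  have hΦF : Φ G * Φ H = Polynomial.X ^ (q ^ 2 * (q - 1)) *
      Polynomial.C (dgzF q (X 0) (X 1) (X 2)) := by
    rw [← map_mul, hGH]
    change Φ.toRingHom _ = _
    rw [map_dgzF, map_dgzF, ← dgzF_scale h.1]
    simp [Φ]
  have hne : Φ G * Φ H ≠ 0 := by
    rw [hΦF]
    exact mul_ne_zero (pow_ne_zero _ Polynomial.X_ne_zero) (by simpa using hF)
  have hG0 := left_ne_zero_of_mul hne
  have hH0 := right_ne_zero_of_mul hne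
  -- the order and the degree in `T` add up to the same number, hence agree for each factor
  have hd := congrArg Polynomial.natDegree hΦF
  have ht := congrArg Polynomial.natTrailingDegree hΦF
  rw [Polynomial.natDegree_mul hG0 hH0, mul_comm, Polynomial.natDegree_C_mul_X_pow _ _ hF] at hd
  rw [Polynomial.natTrailingDegree_mul hG0 hH0, mul_comm,
    Polynomial.natTrailingDegree_mul_X_pow (by simpa using hF),
    Polynomial.natTrailingDegree_C] at ht
  have hc0 : (Φ G).coeff 0 = C (eval 0 G) := by
    have : (Polynomial.evalRingHom (0 : MvPolynomial (Fin 3) K)).comp Φ.toRingHom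
        = C.comp (eval (0 : Fin 3 → K)) := by
      apply MvPolynomial.ringHom_ext
      · intro r; simp [Φ, Polynomial.algebraMap_apply]
      · intro i; simp [Φ]
    have := congrArg (fun f => f G) this
    simpa [Polynomial.coeff_zero_eq_eval_zero] using this
  have hc1 : (Φ G).eval 1 = G := by
    have : (Polynomial.evalRingHom (1 : MvPolynomial (Fin 3) K)).comp Φ.toRingHom
        = RingHom.id _ := by
      apply MvPolynomial.ringHom_ext
      · intro r; simp [Φ, Polynomial.algebraMap_apply]
      · intro i; simp [Φ]
    exact congrArg (fun f => f G) this
  have ht0 : (Φ G).natTrailingDegree = 0 :=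
    Polynomial.natTrailingDegree_eq_zero.2 (Or.inr (by rw [hc0]; simpa using hG))
  have h1 := Polynomial.natTrailingDegree_le_natDegree (Φ G)
  have h2 := Polynomial.natTrailingDegree_le_natDegree (Φ H)
  have hd0 : (Φ G).natDegree = 0 := by omega
  rw [Polynomial.eq_C_of_natDegree_eq_zero hd0, Polynomial.eval_C, hc0] at hc1
  rw [← hc1]
  exact (IsUnit.mk0 _ hG).map C

/-! ### Zeros shared by two factors -/

theorem dvd_dgzC_sub {R : Type*} [CommRing R] (q : ℕ) (a b t : R) :
    t ∣ dgzC q a (b + t) - dgzC q a b := by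
  have h1 : t ∣ (b + t) ^ q - b ^ q := by simpa using sub_dvd_pow_sub_pow (b + t) b q
  have h2 : t ∣ ((b + t) ^ q - a ^ (q - 1) * (b + t)) - (b ^ q - a ^ (q - 1) * b) := by
    have : ((b + t) ^ q - a ^ (q - 1) * (b + t)) - (b ^ q - a ^ (q - 1) * b)
        = ((b + t) ^ q - b ^ q) - a ^ (q - 1) * t := by ring
    rw [this]
    exact dvd_sub h1 (dvd_mul_left _ _)
  have h3 := h2.trans (sub_dvd_pow_sub_pow _ _ (q - 1))
  simpa [dgzC] using h3

theorem dgzM_mul_dgzC {R : Type*} [CommRing R] {q : ℕ} (h : FrobAdd q R) (a b : R) :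
    dgzM q a b * dgzC q a b = a * (b ^ q) ^ q - (a ^ q) ^ q * b := by
  have ha := pow_sq_eq (dgzL_self_left h a b)
  have hb := pow_sq_eq (dgzL_self_right h a b)
  rw [ha, hb]
  unfold dgzM; ring

/-- Substituting `X ↦ X^m` multiplies the order of vanishing at zero by `m`. -/
theorem le_mul_natTrailingDegree {K : Type*} [Field K] {m w : ℕ} (hm : 0 < m)
    {g : Polynomial K} (hg : g ≠ 0) (h : Polynomial.X ^ w ∣ Polynomial.expand K m g) :
    w ≤ m * g.natTrailingDegree := by
  by_contra! hlt
  have := Polynomial.X_pow_dvd_iff.1 h _ hlt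
  rw [Polynomial.coeff_expand_mul' hm] at this
  exact hg (Polynomial.trailingCoeff_eq_zero.1 this)

theorem natTrailingDegree_pos {K : Type*} [Field K] {g : Polynomial K} (hg : g ≠ 0)
    (h : g.eval 0 = 0) : 0 < g.natTrailingDegree := by
  rw [Nat.pos_iff_ne_zero, Ne, Polynomial.natTrailingDegree_eq_zero]
  rw [← Polynomial.coeff_zero_eq_eval_zero] at h
  tauto

/-- When `c = 0`, every zero `e` of `L` is a combination of `a` and `b` with coefficients fixed by the
`q`-Frobenius. Cramer's rule for `e = α a + β b`, `e^q = α a^q + β b^q` gives `α` and `β`; they are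
fixed because the recursion `t^{q²} = -M^{q-1} t` scales numerator and denominator alike. -/
theorem exists_frob_fixed {K : Type*} [Field K] {q : ℕ} (h : FrobAdd q K) {a b e : K}
    (hM : dgzM q a b ≠ 0) (hC : dgzC q a b = 0) (hL : dgzL q a b e = 0) :
    ∃ α β : K, α ^ q = α ∧ β ^ q = β ∧ e = α * a + β * b := by
  have ha := pow_sq_eq (dgzL_self_left h a b)
  have hb := pow_sq_eq (dgzL_self_right h a b)
  have he := pow_sq_eq hL
  rw [hC, zero_mul, zero_sub] at ha hb he
  have hMq : dgzM q a b ^ q = dgzM q a b ^ (q - 1) * dgzM q a b := by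
    rw [← pow_succ, Nat.sub_add_cancel (by have := h.1; omega)]
  have hm : dgzM q a b ^ (q - 1) ≠ 0 := pow_ne_zero _ hM
  refine ⟨(e * b ^ q - e ^ q * b) / dgzM q a b, (a * e ^ q - a ^ q * e) / dgzM q a b, ?_, ?_, ?_⟩
  · rw [div_pow, h.sub, mul_pow, mul_pow, hb, he, hMq]
    field_simp
    ring
  · rw [div_pow, h.sub, mul_pow, mul_pow, ha, he, hMq]
    field_simp
    ring
  · field_simp
    unfold dgzM; ring

/-- The partial derivative `∂F/∂e` is `-L^{q-2} M^{q-1}`. -/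
theorem eval_derivative_dgzF {K : Type*} [Field K] {q : ℕ} (hq : 2 ≤ q) (hqK : (q : K) = 0)
    (a b e : K) :
    (Polynomial.derivative
      (dgzF q (Polynomial.C a) (Polynomial.C b) (Polynomial.C e + Polynomial.X))).eval 0
      = - (dgzL q a b e ^ (q - 2) * dgzM q a b ^ (q - 1)) := by
  have h1 : ((q - 1 : ℕ) : K) = -1 := by
    rw [Nat.cast_sub (by omega), hqK]; simp
  unfold dgzF dgzL
  rw [← map_dgzC, ← map_dgzM]
  simp [Polynomial.derivative_pow, hqK, h1, show q - 1 - 1 = q - 2 by omega,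
    -map_sub, -map_pow, ← Polynomial.C_pow]

/-- `L` is invariant under translating its last argument by a Frobenius-fixed combination of the
first two. -/
theorem dgzL_comb {K R : Type*} [Field K] [CommRing R] {q : ℕ} (h : FrobAdd q R) (i : K →+* R)
    {α β : K} (hα : α ^ q = α) (hβ : β ^ q = β) (a : K) (y z : R) :
    dgzL q (i a) y (i α * i a + i β * y + z) = dgzL q (i a) y z := by
  rw [dgzL_add h, dgzL_add h, dgzL_mul _ _ _ _ (by rw [← map_pow, hα]),
    dgzL_mul _ _ _ _ (by rw [← map_pow, hβ]), dgzL_self_left h, dgzL_self_right h]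
  ring

namespace Polynomial

theorem natTrailingDegree_pow_of_domain {K : Type*} [Field K] {g : K[X]} (hg : g ≠ 0) (m : ℕ) :
    (g ^ m).natTrailingDegree = m * g.natTrailingDegree := by
  induction m with
  | zero => simp
  | succ m ih => rw [pow_succ, natTrailingDegree_mul (pow_ne_zero _ hg) hg, ih]; ring

/-- A common zero of two complementary factors of `F` satisfies `M = 0`: when `M ≠ 0`, the curve
`F = 0` on the plane `x = a` has a single branch at the point. The weighted order argument is
carried out in `K[u][T]`: `Φ` substitutes the pencil `t = u T^{q-1}`, `s = (1 - u) T^q`, whose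
members `u = 0` and `u = 1` are the lines `t = 0` and `s = 0`, parametrized by `T^q` and
`T^{q-1}`. -/
theorem dgzM_eq_zero_of_zero {K : Type*} [Field K] {q : ℕ} (h : FrobAdd q K)
    (h' : FrobAdd q K[X]) (h'' : FrobAdd q K[X][X]) (hqK : (q : K) = 0)
    {G H : MvPolynomial (Fin 3) K}
    (hGH : G * H = dgzF q (MvPolynomial.X 0) (MvPolynomial.X 1) (MvPolynomial.X 2))
    {P : Fin 3 → K} (hG : MvPolynomial.eval P G = 0) (hH : MvPolynomial.eval P H = 0) :
    dgzM q (P 0) (P 1) = 0 := by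
  by_contra hM
  have hq := h.1
  obtain ⟨a, ha⟩ : ∃ a, a = P 0 := ⟨_, rfl⟩
  obtain ⟨b, hb⟩ : ∃ b, b = P 1 := ⟨_, rfl⟩
  obtain ⟨e, he⟩ : ∃ e, e = P 2 := ⟨_, rfl⟩
  rw [← ha, ← hb] at hM
  have hF : dgzF q a b e = 0 := by
    have := congrArg (MvPolynomial.eval P) hGH
    rw [map_mul, hG, zero_mul, map_dgzF] at this
    simpa [ha, hb, he] using this.symm
  let φ : MvPolynomial (Fin 3) K →ₐ[K] K[X] := MvPolynomial.aeval ![C a, C b, C e + X]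
  have hφ0 : ∀ f, (φ f).eval 0 = MvPolynomial.eval P f := by
    have : (evalRingHom 0).comp φ.toRingHom = MvPolynomial.eval P := by
      apply MvPolynomial.ringHom_ext
      · intro r; simp [φ]
      · intro i; fin_cases i <;> simp [φ, ha, hb, he]
    exact fun f => congrArg (fun g => g f) this
  have hφF : φ G * φ H = dgzF q (C a) (C b) (C e + X) := by
    rw [← map_mul, hGH]
    change φ.toRingHom _ = _
    rw [map_dgzF]; simp [φ]
  -- the point is a common zero of two factors, so the derivative of `F` along `z` vanishes there
  have hL : dgzL q a b e = 0 := by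
    have h1 := eval_derivative_dgzF hq hqK a b e
    rw [← hφF, derivative_mul, eval_add, eval_mul, eval_mul, hφ0, hφ0, hG, hH] at h1
    simp only [mul_zero, zero_mul, add_zero] at h1
    have h2 := (mul_eq_zero.1 (neg_eq_zero.1 h1.symm)).resolve_right (pow_ne_zero _ hM)
    exact eq_zero_of_pow_eq_zero h2
  have hC : dgzC q a b = 0 := by
    rw [dgzF, hL, zero_pow (by omega), zero_add] at hF
    exact eq_zero_of_pow_eq_zero hF
  have ha0 : a ≠ 0 := by
    rintro rfl
    simp [dgzM, show q ≠ 0 by omega] at hM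
  obtain ⟨α, β, hα, hβ, heq⟩ := exists_frob_fixed h hM hC hL
  -- the restriction to the vertical line through `P`
  have hφt : φ G * φ H ≠ 0 ∧ (φ G * φ H).natTrailingDegree ≤ q - 1 := by
    have h1 : dgzF q (C a) (C b) (C e + X)
        = (X ^ (q ^ 2) + C (dgzM q a b ^ (q - 1)) * X) ^ (q - 1) := by
      have : dgzL q (C a) (C b) (C e + X) = X ^ (q ^ 2) + C (dgzM q a b ^ (q - 1)) * X := by
        rw [dgzL_add h', ← map_dgzL, hL, map_zero, zero_add]
        unfold dgzL
        rw [← map_dgzC, ← map_dgzM, hC]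
        simp
      rw [dgzF, this, ← map_dgzC, hC, map_zero, zero_pow (by omega), add_zero]
    have hc : (X ^ (q ^ 2) + C (dgzM q a b ^ (q - 1)) * X : K[X]).coeff 1 ≠ 0 := by
      have : 1 ≠ q ^ 2 := by nlinarith
      rw [coeff_add, coeff_X_pow, if_neg this, coeff_C_mul, coeff_X_one, zero_add, mul_one]
      exact pow_ne_zero _ hM
    have h0 : (X ^ (q ^ 2) + C (dgzM q a b ^ (q - 1)) * X : K[X]) ≠ 0 := fun h =>
      hc (by rw [h, coeff_zero])
    have hle := natTrailingDegree_le_of_ne_zero hc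
    rw [hφF, h1]
    refine ⟨pow_ne_zero _ h0, ?_⟩
    rw [natTrailingDegree_pow_of_domain h0]
    nlinarith
  -- the restriction to the line through `P` on which `L` vanishes
  let ψ : MvPolynomial (Fin 3) K →ₐ[K] K[X] :=
    MvPolynomial.aeval ![C a, C b + X, C α * C a + C β * (C b + X)]
  have hψ0 : ∀ f, (ψ f).eval 0 = MvPolynomial.eval P f := by
    have : (evalRingHom 0).comp ψ.toRingHom = MvPolynomial.eval P := by
      apply MvPolynomial.ringHom_ext
      · intro r; simp [ψ]
      · intro i; fin_cases i <;> simp [ψ, ha, hb, ← he, heq]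
    exact fun f => congrArg (fun g => g f) this
  have hψF : ψ G * ψ H = dgzF q (C a) (C b + X) (C α * C a + C β * (C b + X)) := by
    rw [← map_mul, hGH]
    change ψ.toRingHom _ = _
    rw [map_dgzF]; simp [ψ]
  -- on this line `F = c^q`, and `c` has a simple zero since `M c = a y^{q²} - a^{q²} y`
  have hψt : ψ G * ψ H ≠ 0 ∧ (ψ G * ψ H).natTrailingDegree ≤ q := by
    have h1 : dgzF q (C a) (C b + X) (C α * C a + C β * (C b + X))
        = dgzC q (C a) (C b + X) ^ q := by
      have := dgzL_comb h' C hα hβ a (C b + X) 0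
      rw [add_zero] at this
      rw [dgzF, this]
      simp [dgzL, show q ≠ 0 by omega, show q - 1 ≠ 0 by omega]
    have h2 := dgzM_mul_dgzC h' (C a) (C b + X)
    have h3 := dgzM_mul_dgzC h a b
    rw [hC, mul_zero] at h3
    have h4 : dgzM q (C a) (C b + X) * dgzC q (C a) (C b + X)
        = C a * X ^ (q * q) - C ((a ^ q) ^ q) * X := by
      have := congrArg (C : K →+* K[X]) h3
      rw [h2, h'.2, h'.2, ← pow_mul X]
      simp only [map_zero, map_sub, map_mul, map_pow] at this ⊢
      linear_combination -this
    have hc : (dgzM q (C a) (C b + X) * dgzC q (C a) (C b + X)).coeff 1 ≠ 0 := by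
      have : 1 ≠ q * q := by nlinarith
      rw [h4, coeff_sub, coeff_C_mul, coeff_X_pow, if_neg this, coeff_C_mul, coeff_X_one, mul_zero,
        zero_sub, mul_one]
      exact neg_ne_zero.2 (pow_ne_zero _ (pow_ne_zero _ ha0))
    have h0 : dgzM q (C a) (C b + X) * dgzC q (C a) (C b + X) ≠ 0 := fun h =>
      hc (by rw [h, coeff_zero])
    have hle := natTrailingDegree_le_of_ne_zero hc
    rw [natTrailingDegree_mul (left_ne_zero_of_mul h0) (right_ne_zero_of_mul h0)] at hle
    rw [hψF, h1]
    refine ⟨pow_ne_zero _ (right_ne_zero_of_mul h0), ?_⟩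
    rw [natTrailingDegree_pow_of_domain (right_ne_zero_of_mul h0)]
    nlinarith
  -- the weighted pencil of curves interpolating between the two lines
  let y : K[X][X] := C (C b) + C X * X ^ (q - 1)
  let Φ : MvPolynomial (Fin 3) K →ₐ[K] K[X][X] :=
    MvPolynomial.aeval ![C (C a), y, C (C α) * C (C a) + C (C β) * y + C (1 - X) * X ^ q]
  have hΦF : Φ G * Φ H = dgzF q (C (C a)) y
      (C (C α) * C (C a) + C (C β) * y + C (1 - X) * X ^ q) := by
    rw [← map_mul, hGH]
    change Φ.toRingHom _ = _
    rw [map_dgzF]; simp [Φ]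
  have hs0 : ∀ f, mapRingHom (evalRingHom 0) (Φ f) = expand K q (φ f) := by
    have : (mapRingHom (evalRingHom (0 : K))).comp Φ.toRingHom
        = (expand K q).toRingHom.comp φ.toRingHom := by
      apply MvPolynomial.ringHom_ext
      · intro r; simp [Φ, φ, Polynomial.algebraMap_apply]
      · intro i; fin_cases i <;> simp [Φ, φ, y, heq]
    exact fun f => congrArg (fun g => g f) this
  have hs1 : ∀ f, mapRingHom (evalRingHom 1) (Φ f) = expand K (q - 1) (ψ f) := by
    have : (mapRingHom (evalRingHom (1 : K))).comp Φ.toRingHom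
        = (expand K (q - 1)).toRingHom.comp ψ.toRingHom := by
      apply MvPolynomial.ringHom_ext
      · intro r; simp [Φ, ψ, Polynomial.algebraMap_apply]
      · intro i; fin_cases i <;> simp [Φ, ψ, y]
    exact fun f => congrArg (fun g => g f) this
  have hdvd : X ^ (q * (q - 1)) ∣ Φ G * Φ H := by
    have h1 := dgzL_comb h'' ((C : K[X] →+* K[X][X]).comp C) hα hβ a y (C (1 - X) * X ^ q)
    simp only [RingHom.comp_apply] at h1
    rw [hΦF, dgzF, h1]
    refine dvd_add ?_ ?_
    · rw [pow_mul]
      refine pow_dvd_pow_of_dvd ?_ _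
      have hX : (X : K[X][X]) ^ q ∣ C (1 - X) * X ^ q := dvd_mul_left _ _
      unfold dgzL
      refine dvd_add (dvd_sub ?_ ?_) (hX.mul_left _)
      · exact hX.trans (dvd_pow_self _ (by positivity))
      · exact (hX.trans (dvd_pow_self _ (by omega))).mul_left _
    · rw [mul_comm, pow_mul]
      refine pow_dvd_pow_of_dvd ?_ _
      have h2 := dvd_dgzC_sub q (C (C a)) (C (C b)) (C X * X ^ (q - 1) : K[X][X])
      have h3 : dgzC q (C (C a)) (C (C b) : K[X][X]) = 0 := by
        rw [← map_dgzC, ← map_dgzC, hC, map_zero, map_zero]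
      rw [h3, sub_zero] at h2
      exact (dvd_mul_left _ _).trans h2
  have hΦ0 : Φ G * Φ H ≠ 0 := by
    intro h0
    rw [← map_mul] at h0 hφt
    have := hs0 (G * H)
    rw [h0, map_zero, eq_comm, expand_eq_zero (by omega)] at this
    exact hφt.1 this
  have hw : q * (q - 1) ≤ (Φ G).natTrailingDegree + (Φ H).natTrailingDegree := by
    rw [← natTrailingDegree_mul (left_ne_zero_of_mul hΦ0) (right_ne_zero_of_mul hΦ0)]
    refine le_natTrailingDegree hΦ0 fun m hm => X_pow_dvd_iff.1 hdvd m hm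
  have hXd : ∀ f, X ^ (Φ f).natTrailingDegree ∣ Φ f := fun f =>
    X_pow_dvd_iff.2 fun d hd => coeff_eq_zero_of_lt_natTrailingDegree hd
  have hi : ∀ f, φ f ≠ 0 → (Φ f).natTrailingDegree ≤ q * (φ f).natTrailingDegree := fun f hf => by
    refine le_mul_natTrailingDegree (by omega) hf ?_
    rw [← hs0]
    simpa using _root_.map_dvd (mapRingHom (evalRingHom (0 : K))) (hXd f)
  have hj : ∀ f, ψ f ≠ 0 → (Φ f).natTrailingDegree ≤ (q - 1) * (ψ f).natTrailingDegree :=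
    fun f hf => by
    refine le_mul_natTrailingDegree (by omega) hf ?_
    rw [← hs1]
    simpa using _root_.map_dvd (mapRingHom (evalRingHom (1 : K))) (hXd f)
  obtain ⟨hφne, hφle⟩ := hφt
  obtain ⟨hψne, hψle⟩ := hψt
  have hφG := left_ne_zero_of_mul hφne
  have hφH := right_ne_zero_of_mul hφne
  have hψG := left_ne_zero_of_mul hψne
  have hψH := right_ne_zero_of_mul hψne
  rw [natTrailingDegree_mul hφG hφH] at hφle
  rw [natTrailingDegree_mul hψG hψH] at hψle
  have i1 := hi G hφG
  have i2 := hi H hφH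
  have j1 := hj G hψG
  have j2 := hj H hψH
  have jG := natTrailingDegree_pos hψG (by rw [hψ0, hG])
  have jH := natTrailingDegree_pos hψH (by rw [hψ0, hH])
  generalize (Φ G).natTrailingDegree = w at *
  generalize (Φ H).natTrailingDegree = w' at *
  generalize (φ G).natTrailingDegree = i at *
  generalize (φ H).natTrailingDegree = i' at *
  generalize (ψ G).natTrailingDegree = j at *
  generalize (ψ H).natTrailingDegree = j' at *
  -- the upper bounds on `w + w'` add up to the lower bound, so each inequality is an equality
  obtain ⟨r, rfl⟩ : ∃ r, q = r + 1 := ⟨q - 1, by omega⟩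
  simp only [Nat.add_sub_cancel] at *
  have e1 : (r + 1) * i = r * j := by nlinarith
  have e2 : r + 1 ∣ j :=
    (Nat.Coprime.dvd_of_dvd_mul_left (by simp) ⟨i, e1.symm⟩ : r + 1 ∣ j)
  have := Nat.le_of_dvd jG e2
  omega

end Polynomial

/-! ### Irreducibility -/

/-- The polynomial `F` is irreducible over any algebraically closed field whose characteristic `p`
satisfies `q = p ^ n`. -/
theorem dgzF_irreducible {K : Type*} [Field K] [IsAlgClosed K] (p n : ℕ) [Fact p.Prime]
    [CharP K p] (hn : 0 < n) :
    Irreducible (dgzF (p ^ n) (X 0 : MvPolynomial (Fin 3) K) (X 1) (X 2)) := by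
  have h0 : FrobAdd (p ^ n) K := FrobAdd.of_charP p n hn
  have h1 : FrobAdd (p ^ n) (Polynomial K) := FrobAdd.of_charP p n hn
  have h2 : FrobAdd (p ^ n) (Polynomial (Polynomial K)) := FrobAdd.of_charP p n hn
  have h3 : FrobAdd (p ^ n) (MvPolynomial (Fin 3) K) := FrobAdd.of_charP p n hn
  have hqK : ((p ^ n : ℕ) : K) = 0 := by simp [hn.ne']
  generalize p ^ n = q at *
  have hdet := det₂_X_ne_zero h3
  have hF0 : eval 0 (dgzF q (X 0 : MvPolynomial (Fin 3) K) (X 1) (X 2)) = 0 := by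
    have hq := h0.1
    rw [map_dgzF]
    simp [dgzF, dgzL, dgzC, show q ≠ 0 by omega, show q - 1 ≠ 0 by omega,
      zero_pow (show q - 1 ≠ 0 by omega)]
  have hren : ∀ i : Fin 3, ∀ G H : MvPolynomial (Fin 3) K,
      G * H = dgzF q (X 0) (X 1) (X 2) → ∀ j : Fin 3,
      rename (Equiv.swap i j) G * rename (Equiv.swap i j) H = dgzF q (X 0) (X 1) (X 2) := by
    intro i G H hGH j
    rw [← map_mul, hGH]
    change (rename (Equiv.swap i j)).toRingHom _ = _
    rw [map_dgzF]
    simp only [AlgHom.toRingHom_eq_coe, RingHom.coe_coe, rename_X]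
    fin_cases i <;> fin_cases j <;>
      simp [Equiv.swap_apply_def, dgzF_swap₀₁ h3 hdet, dgzF_swap₁₂ h3 hdet, dgzF_swap₀₂ h3 hdet]
  -- at a common zero with `P 0 ≠ 0`, two of the Moore determinants vanish, hence `F P ≠ 0`
  have hP0 : ∀ G H : MvPolynomial (Fin 3) K, G * H = dgzF q (X 0) (X 1) (X 2) →
      ∀ P : Fin 3 → K, eval P G = 0 → eval P H = 0 → P 0 = 0 := by
    intro G H hGH P hG hH
    by_contra ha
    have hb := Polynomial.dgzM_eq_zero_of_zero h0 h1 h2 hqK hGH hG hH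
    have he : dgzM q (P 0) (P 2) = 0 := by
      have hσ : (P ∘ Equiv.swap (1 : Fin 3) 2) ∘ Equiv.swap (1 : Fin 3) 2 = P := by
        ext k; simp
      exact Polynomial.dgzM_eq_zero_of_zero (P := P ∘ Equiv.swap (1 : Fin 3) 2) h0 h1 h2 hqK
        (hren 1 G H hGH 2) (by rw [eval_rename, hσ, hG]) (by rw [eval_rename, hσ, hH])
    refine dgzF_ne_zero h0 ha hb he ?_
    have := congrArg (eval P) hGH
    rw [map_mul, hG, zero_mul, map_dgzF] at this
    simpa using this.symm
  refine ⟨fun hu => ?_, fun G H hGH => ?_⟩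
  · have := hu.map (eval (0 : Fin 3 → K))
    rw [hF0] at this
    exact not_isUnit_zero this
  · by_contra! hcon
    have hG : eval 0 G = 0 := by
      by_contra h
      exact hcon.1 (isUnit_of_mul_eq h3 hGH.symm h)
    have hH : eval 0 H = 0 := by
      by_contra h
      exact hcon.2 (isUnit_of_mul_eq h3 ((mul_comm H G).trans hGH.symm) h)
    obtain ⟨P, hP, hPG, hPH⟩ := exists_common_zero G H hG hH
    refine hP (funext fun j => ?_)
    have hσ : (P ∘ Equiv.swap (0 : Fin 3) j) ∘ Equiv.swap (0 : Fin 3) j = P := by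
      ext k; simp
    have := hP0 _ _ (hren 0 G H hGH.symm j) (P ∘ Equiv.swap (0 : Fin 3) j)
      (by rw [eval_rename, hσ, hPG]) (by rw [eval_rename, hσ, hPH])
    simpa using this

/-- The defining polynomial `F = D₁ / D₂` of the Dickson–Guralnick–Zieve curve, regarded as a
polynomial over an algebraic closure `k = 𝔽̄_q`, is irreducible in `k[x, y, z]`. -/
theorem DGZ_F_irreducible (p n : ℕ) [Fact p.Prime] (hn : 0 < n)
    (F : MvPolynomial (Fin 3) (GaloisField p n)) (hF : DGZ_D2 p n * F = DGZ_D1 p n) :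
    Irreducible (MvPolynomial.map
      (algebraMap (GaloisField p n) (AlgebraicClosure (GaloisField p n))) F) := by
  let K := AlgebraicClosure (GaloisField p n)
  have h : FrobAdd (p ^ n) (MvPolynomial (Fin 3) K) := FrobAdd.of_charP p n hn
  have h1 : MvPolynomial.map (algebraMap (GaloisField p n) K) (DGZ_D1 p n)
      = det₁ (p ^ n) (X 0) (X 1) (X 2) := by
    simp [DGZ_D1, det₁, Matrix.det_fin_three]
  have h2 : MvPolynomial.map (algebraMap (GaloisField p n) K) (DGZ_D2 p n)
      = det₂ (p ^ n) (X 0) (X 1) (X 2) := by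
    simp [DGZ_D2, det₂, Matrix.det_fin_three]
  have h3 := congrArg (MvPolynomial.map (algebraMap (GaloisField p n) K)) hF
  rw [map_mul, h1, h2, det₁_eq h] at h3
  rw [mul_left_cancel₀ (det₂_X_ne_zero h) h3]
  exact dgzF_irreducible p n hn
end

section
/- Let q be a prime power and let F = D₁/D₂ ∈ 𝔽_q[x,y,z] be the defining polynomial of the Dickson–Guralnick–Zieve curve. For every matrix A ∈ GL₃(𝔽_q), the polynomial obtained by substituting the linear forms A·(x,y,z)ᵀ into F equals F itself; in particular the projective linear group PGL(3,𝔽_q) acts on the Dickson–Guralnick–Zieve curve, preserving its zero set in ℙ². -/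
/-!
Applying the substitution `v ↦ A v` to a matrix whose rows are
`(xᵢ ^ q ^ e₀, xᵢ ^ q ^ e₁, xᵢ ^ q ^ e₂)` amounts to multiplying it by `A` on the left, because
`q`-power maps are additive and fix the entries of `A`. Hence both determinants `D₁` and `D₂` get
multiplied by `det A`, and the factor cancels in
`D₂ * F = D₁` since `det A ≠ 0` and `D₂ ≠ 0`. The latter holds because the specialization
`(x, y, z) = (1, T, T²)` turns `D₂` into the Vandermonde determinant of the pairwise distinct
elements `T, T ^ q, T ^ q²`.
-/

open MvPolynomial

/-- Raising an `𝔽_q`-linear form to the power `q ^ k` raises the variables to that power and leaves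
the coefficients alone. -/
theorem linearForm_pow (p n : ℕ) [Fact p.Prime] (hn : 0 < n) (k : ℕ)
    (a : Fin 3 → GaloisField p n) :
    (∑ j, C (a j) * X j : MvPolynomial (Fin 3) (GaloisField p n)) ^ (p ^ n) ^ k =
      ∑ j, C (a j) * X j ^ (p ^ n) ^ k := by
  have hfix (c : GaloisField p n) : c ^ (p ^ n) ^ k = c := by
    have := Fintype.ofFinite (GaloisField p n)
    have hcard : Fintype.card (GaloisField p n) = p ^ n := by
      rw [← Nat.card_eq_fintype_card, GaloisField.card p n hn.ne']
    rw [← hcard, FiniteField.pow_card_pow]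
  rw [← pow_mul, sum_pow_char_pow, pow_mul]
  simp only [mul_pow, ← C_pow, hfix]

/-- A determinant with entries `xᵢ ^ q ^ eⱼ` is a relative invariant of `GL₃(𝔽_q)`, with
character `det`. -/
theorem bind₁_det_pow (p n : ℕ) [Fact p.Prime] (hn : 0 < n) (e : Fin 3 → ℕ)
    (A : Matrix (Fin 3) (Fin 3) (GaloisField p n)) :
    bind₁ (fun i : Fin 3 => ∑ j : Fin 3, C (A i j) * X j)
      (Matrix.det (Matrix.of fun i j : Fin 3 =>
        (X i : MvPolynomial (Fin 3) (GaloisField p n)) ^ (p ^ n) ^ e j)) =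
    C A.det * Matrix.det (Matrix.of fun i j : Fin 3 =>
        (X i : MvPolynomial (Fin 3) (GaloisField p n)) ^ (p ^ n) ^ e j) := by
  rw [AlgHom.map_det, RingHom.map_det, ← Matrix.det_mul]
  congr 1
  ext1 i j
  simp [Matrix.mul_apply, linearForm_pow p n hn]

theorem DGZ_D1_eq (p n : ℕ) [Fact p.Prime] :
    DGZ_D1 p n = Matrix.det (Matrix.of fun i j : Fin 3 =>
      (X i : MvPolynomial (Fin 3) (GaloisField p n)) ^ (p ^ n) ^ (![0, 1, 3] j)) := by
  unfold DGZ_D1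
  congr 1
  ext1 i j
  fin_cases j <;> simp

theorem DGZ_D2_eq (p n : ℕ) [Fact p.Prime] :
    DGZ_D2 p n = Matrix.det (Matrix.of fun i j : Fin 3 =>
      (X i : MvPolynomial (Fin 3) (GaloisField p n)) ^ (p ^ n) ^ (![0, 1, 2] j)) := by
  unfold DGZ_D2
  congr 1
  ext1 i j
  fin_cases j <;> simp

theorem DGZ_D2_ne_zero (p n : ℕ) [hp : Fact p.Prime] (hn : 0 < n) : DGZ_D2 p n ≠ 0 := by
  intro h
  rw [DGZ_D2_eq] at h
  have h' := congrArg (aeval fun i : Fin 3 =>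
    (Polynomial.X : Polynomial (GaloisField p n)) ^ (i : ℕ)) h
  rw [AlgHom.map_det, map_zero] at h'
  have hV : (aeval fun i : Fin 3 =>
        (Polynomial.X : Polynomial (GaloisField p n)) ^ (i : ℕ)).mapMatrix
      (Matrix.of fun i j : Fin 3 =>
        (X i : MvPolynomial (Fin 3) (GaloisField p n)) ^ (p ^ n) ^ (![0, 1, 2] j)) =
      (Matrix.vandermonde fun j : Fin 3 =>
        (Polynomial.X : Polynomial (GaloisField p n)) ^ (p ^ n) ^ (j : ℕ)).transpose := by
    ext1 i j
    fin_cases j <;> simp [Matrix.vandermonde_apply, ← pow_mul, mul_comm]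
  rw [hV, Matrix.det_transpose] at h'
  refine Matrix.det_vandermonde_ne_zero_iff.2 (fun i j hij => ?_) h'
  have hdeg := congrArg Polynomial.natDegree hij
  simp only [Polynomial.natDegree_X_pow] at hdeg
  exact Fin.ext (Nat.pow_right_injective (Nat.one_lt_pow hn.ne' hp.out.one_lt) hdeg)

/-- For every `A ∈ GL₃(𝔽_q)`, substituting the linear forms `A·(x,y,z)ᵀ` into the defining
polynomial `F = D₁/D₂` of the Dickson–Guralnick–Zieve curve leaves `F` unchanged; in
particular `PGL(3, 𝔽_q)` acts on the curve, preserving its zero set in `ℙ²`. -/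
theorem DGZ_F_invariant (p n : ℕ) [Fact p.Prime] (hn : 0 < n)
    (F : MvPolynomial (Fin 3) (GaloisField p n)) (hF : DGZ_D2 p n * F = DGZ_D1 p n)
    (A : GL (Fin 3) (GaloisField p n)) :
    MvPolynomial.bind₁
        (fun i : Fin 3 => ∑ j : Fin 3, C ((A : Matrix (Fin 3) (Fin 3) (GaloisField p n)) i j) * X j)
        F = F := by
  have h := congrArg (bind₁ fun i : Fin 3 =>
    ∑ j : Fin 3, C ((A : Matrix (Fin 3) (Fin 3) (GaloisField p n)) i j) * X j) hF
  rw [map_mul, DGZ_D1_eq, DGZ_D2_eq, bind₁_det_pow p n hn, bind₁_det_pow p n hn, ← DGZ_D1_eq,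
    ← DGZ_D2_eq, ← hF, mul_assoc] at h
  have hA : (C (A : Matrix (Fin 3) (Fin 3) (GaloisField p n)).det :
      MvPolynomial (Fin 3) (GaloisField p n)) ≠ 0 :=
    C_ne_zero.2 ((Matrix.isUnit_iff_isUnit_det _).1 A.isUnit).ne_zero
  exact mul_left_cancel₀ (DGZ_D2_ne_zero p n hn) (mul_left_cancel₀ hA h)
end

section
/- Let q be a prime power, k = 𝔽̄_q, and let F ∈ 𝔽_q[x,y,z] be the defining polynomial of the Dickson–Guralnick–Zieve curve C. Then C contains no 𝔽_q-rational point of ℙ²: for every nonzero vector v ∈ 𝔽_q³, F(v) ≠ 0. -/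
/-!
Complete `v` to a basis `v, a, b` of `𝔽_q³` and restrict to the curve `w = v + a T + b T²` over
`𝔽_q[T]`, which passes through `v` at `T = 0`. Since `w ^ (q ^ k) = v + a T^(q^k) + b T^(2 q^k)`,
each Dickson determinant restricts to `det (v, a, b)` times the same determinant evaluated at
`(1, T, T²)`, and both of these have lowest term `-T^(q+2)`. Cancelling `det (v, a, b) * T^(q+2)`
from `D₂ F = D₁` and setting `T = 0` gives `-F(v) = -1`; in fact `F(v) = 1` at every
nonzero rational point.
-/

open MvPolynomial

/-- The parametrised curve `v + a T + b T²` through `v`. -/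
noncomputable def DGZcurve {K : Type*} [Field K] (v a b : Fin 3 → K) (i : Fin 3) :
    Polynomial K :=
  Polynomial.C (v i) + Polynomial.C (a i) * Polynomial.X + Polynomial.C (b i) * Polynomial.X ^ 2

lemma DGZcurve_pow (p n : ℕ) [Fact p.Prime] (hn : 0 < n) (v a b : Fin 3 → GaloisField p n)
    (k : ℕ) (i : Fin 3) :
    DGZcurve v a b i ^ ((p ^ n) ^ k) = Polynomial.C (v i)
      + Polynomial.C (a i) * Polynomial.X ^ ((p ^ n) ^ k)
      + Polynomial.C (b i) * (Polynomial.X ^ ((p ^ n) ^ k)) ^ 2 := by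
  have hc : ∀ c : GaloisField p n, c ^ ((p ^ n) ^ k) = c := by
    intro c
    have := Fintype.ofFinite (GaloisField p n)
    have h := FiniteField.pow_card_pow (K := GaloisField p n) k c
    rwa [← Nat.card_eq_fintype_card, GaloisField.card p n hn.ne'] at h
  have hadd : ∀ f g : Polynomial (GaloisField p n),
      (f + g) ^ ((p ^ n) ^ k) = f ^ ((p ^ n) ^ k) + g ^ ((p ^ n) ^ k) := by
    intro f g
    rw [← pow_mul]
    exact add_pow_char_pow f g p (n * k)
  rw [DGZcurve, hadd, hadd, mul_pow, mul_pow, ← Polynomial.C_pow, ← Polynomial.C_pow,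
    ← Polynomial.C_pow, hc, hc, hc, pow_right_comm Polynomial.X 2]

/-- The unit part of `det [[1, 1, 1], [T, T^q, T^m], [T², T^(2q), T^(2m)]]`, once the
factor `T^(q+2)` is removed; the natural subtractions are exact for `2 ≤ q < m`. -/
noncomputable def DGZunit (K : Type*) [Field K] (q m : ℕ) : Polynomial K :=
  Polynomial.X ^ (2 * m - 2) - 1 - Polynomial.X ^ (2 * m - q - 1)
    - Polynomial.X ^ (q + m - 2) + Polynomial.X ^ (q - 1) + Polynomial.X ^ (m - q)

lemma DGZunit_eval (K : Type*) [Field K] (q m : ℕ) (hq : 2 ≤ q) (hm : q < m) :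
    (DGZunit K q m).eval 0 = -1 := by
  have h1 : 2 * m - 2 ≠ 0 := by omega
  have h2 : 2 * m - q - 1 ≠ 0 := by omega
  have h3 : q + m - 2 ≠ 0 := by omega
  have h4 : q - 1 ≠ 0 := by omega
  have h5 : m - q ≠ 0 := by omega
  simp [DGZunit, h1, h2, h3, h4, h5]

lemma DGZunit_spec (K : Type*) [Field K] (q m : ℕ) (hq : 2 ≤ q) (hm : q < m) :
    (Polynomial.X ^ q - Polynomial.X : Polynomial K) * ((Polynomial.X ^ m) ^ 2 - Polynomial.X ^ 2)
      - ((Polynomial.X ^ q) ^ 2 - Polynomial.X ^ 2) * (Polynomial.X ^ m - Polynomial.X)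
      = Polynomial.X ^ (q + 2) * DGZunit K q m := by
  obtain ⟨r, rfl⟩ := Nat.exists_eq_add_of_le hq
  obtain ⟨s, rfl⟩ := Nat.exists_eq_add_of_lt hm
  rw [DGZunit, show 2 * (2 + r + s + 1) - 2 = 2 * r + 2 * s + 4 by omega,
    show 2 * (2 + r + s + 1) - (2 + r) - 1 = r + 2 * s + 3 by omega,
    show 2 + r + (2 + r + s + 1) - 2 = 2 * r + s + 3 by omega,
    show 2 + r - 1 = r + 1 by omega, show 2 + r + s + 1 - (2 + r) = s + 1 by omega]
  ring

/-- Restriction of a Dickson determinant with exponents `1, q, q^k` to the curve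
`v + a T + b T²`. -/
lemma DGZ_det_curve (p n : ℕ) [Fact p.Prime] (hn : 0 < n) (v a b : Fin 3 → GaloisField p n)
    (k : ℕ) (hk : 2 ≤ k) :
    aeval (DGZcurve v a b) (Matrix.det (Matrix.of fun i j : Fin 3 =>
      (X i : MvPolynomial (Fin 3) (GaloisField p n)) ^ (![1, p ^ n, (p ^ n) ^ k] j)))
      = Polynomial.C (Matrix.det !![v 0, a 0, b 0; v 1, a 1, b 1; v 2, a 2, b 2])
        * (Polynomial.X ^ (p ^ n + 2) * DGZunit (GaloisField p n) (p ^ n) ((p ^ n) ^ k)) := by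
  have hq : 2 ≤ p ^ n := (Fact.out : p.Prime).two_le.trans (Nat.le_self_pow hn.ne' p)
  have hm : p ^ n < (p ^ n) ^ k := by
    calc p ^ n = (p ^ n) ^ 1 := (pow_one _).symm
      _ < (p ^ n) ^ k := Nat.pow_lt_pow_right hq hk
  have e1 := fun i => DGZcurve_pow p n hn v a b 1 i
  have ek := fun i => DGZcurve_pow p n hn v a b k i
  simp only [pow_one] at e1
  rw [← DGZunit_spec _ _ _ hq hm, Matrix.det_fin_three, Matrix.det_fin_three]
  simp only [Matrix.of_apply, Matrix.cons_val_zero, Matrix.cons_val_one, Matrix.cons_val,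
    map_sub, map_add, map_mul, map_pow, aeval_X, e1, ek, pow_one]
  simp only [DGZcurve]
  ring

lemma DGZ_exists_basis {K : Type*} [Field K] (v : Fin 3 → K) (hv : v ≠ 0) :
    ∃ a b : Fin 3 → K,
      Matrix.det !![v 0, a 0, b 0; v 1, a 1, b 1; v 2, a 2, b 2] ≠ 0 := by
  obtain ⟨i, hi⟩ := Function.ne_iff.mp hv
  fin_cases i
  · exact ⟨![0, 1, 0], ![0, 0, 1], by simpa [Matrix.det_fin_three] using hi⟩
  · exact ⟨![1, 0, 0], ![0, 0, 1], by simpa [Matrix.det_fin_three] using hi⟩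
  · exact ⟨![1, 0, 0], ![0, 1, 0], by simpa [Matrix.det_fin_three] using hi⟩

/-- The Dickson–Guralnick–Zieve curve contains no `𝔽_q`-rational point of `ℙ²`: the
defining polynomial `F = D₁/D₂` does not vanish at any nonzero vector `v ∈ 𝔽_q³`. -/
theorem DGZ_no_rational_point (p n : ℕ) [Fact p.Prime] (hn : 0 < n)
    (F : MvPolynomial (Fin 3) (GaloisField p n)) (hF : DGZ_D2 p n * F = DGZ_D1 p n)
    (v : Fin 3 → GaloisField p n) (hv : v ≠ 0) :
    MvPolynomial.eval v F ≠ 0 := by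
  have hq : 2 ≤ p ^ n := (Fact.out : p.Prime).two_le.trans (Nat.le_self_pow hn.ne' p)
  have hm : ∀ k, 2 ≤ k → p ^ n < (p ^ n) ^ k := fun k hk => by
    calc p ^ n = (p ^ n) ^ 1 := (pow_one _).symm
      _ < (p ^ n) ^ k := Nat.pow_lt_pow_right hq hk
  obtain ⟨a, b, hdet⟩ := DGZ_exists_basis v hv
  have h := congrArg (aeval (DGZcurve v a b)) hF
  rw [map_mul, DGZ_D2, DGZ_D1, DGZ_det_curve p n hn v a b 2 le_rfl,
    DGZ_det_curve p n hn v a b 3 (by norm_num), mul_assoc, mul_assoc] at h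
  replace h := mul_left_cancel₀ (Polynomial.C_ne_zero.mpr hdet) h
  replace h := mul_left_cancel₀ (pow_ne_zero _ Polynomial.X_ne_zero) h
  have hcurve : (aeval (DGZcurve v a b) F).eval 0 = MvPolynomial.eval v F := by
    have hc : (fun i => Polynomial.aeval (0 : GaloisField p n) (DGZcurve v a b i)) = v := by
      funext i
      simp [DGZcurve]
    rw [← Polynomial.coe_aeval_eq_eval, ← AlgHom.comp_apply, MvPolynomial.comp_aeval, hc]
    rw [MvPolynomial.aeval_eq_eval]
  replace h := congrArg (Polynomial.eval 0) h
  rw [Polynomial.eval_mul, DGZunit_eval _ _ _ hq (hm 2 le_rfl),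
    DGZunit_eval _ _ _ hq (hm 3 (by norm_num)), hcurve] at h
  intro h0
  simp [h0] at h
end

section
/- Let q > 2 be a prime power, k = 𝔽̄_q, and let F ∈ 𝔽_q[x,y,z] be the defining polynomial of the Dickson–Guralnick–Zieve curve C. A point P ∈ ℙ²(k) is a singular point of C (i.e., F and all three partial derivatives ∂F/∂x, ∂F/∂y, ∂F/∂z vanish at a representative vector of P) if and only if P ∈ ℙ²(𝔽_{q²}) \ ℙ²(𝔽_q), i.e., a representative vector v of P satisfies that v^{(q²)} (coordinatewise q²-th power) is proportional to v but v^{(q)} (coordinatewise q-th power) is not proportional to v. -/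
/-!
Write `q = p ^ n`, `v⁽ⁱ⁾` for the coordinatewise `qⁱ`-th power of `v`, and put
`a = v⁽¹⁾ × v⁽²⁾`, `b = v⁽¹⁾ × v⁽³⁾`. Frobenius commutes with the cross product, so `a = 0` says that
`v⁽¹⁾` is proportional to `v` and `b = 0` that `v⁽²⁾` is proportional to `v`. The claim is thus that
`v` is singular if and only if `b = 0` and `a ≠ 0`.

Restrict everything to lines `v + t w` in `k[t]`. The constant and linear coefficients of
`F (v + t w)` are `F v` and `∇F(v) ⬝ w`. Since `q ≥ 3`, modulo `t³` only the first columns of the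
determinants see `t`: `D₂ ≡ a ⬝ v + t (a ⬝ w)` and `D₁ ≡ b ⬝ v + t (b ⬝ w)`. Comparing coefficients
in `D₂ F = D₁` gives

* `(a ⬝ v) (∇F(v) ⬝ w) + (a ⬝ w) F(v) = b ⬝ w`, and
* if `a ⬝ v = 0`, then `(a ⬝ w) (∇F(v) ⬝ w) = 0`.

If `v` is singular, the first identity yields `b = 0`. Conversely, if `b = 0` and `a ≠ 0`, then
`v⁽²⁾ ∥ v` gives `a ⬝ v = 0`; the first identity gives `F(v) = 0`, and the second shows that
`∇F(v)` vanishes against every `w` outside the plane `a ⬝ w = 0`. Such `w` span `k³`.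

There remains to see that a singular `v` has `a ≠ 0`. If `a = 0`, then `v⁽¹⁾ = c v` with `c ≠ 0`, and
both determinants vanish to order at least `q + 1` in `t`, with `t ^ (q + 1)`-coefficients nonzero
multiples of `(w × w⁽¹⁾) ⬝ v`. Choosing `w` with `(w × w⁽¹⁾) ⬝ v ≠ 0`, the quotient is nonzero at
`t = 0`, that is, `F(v) ≠ 0`.
-/

open MvPolynomial

/-- The defining polynomial of the DGZ curve, regarded over the algebraic closure `k = 𝔽̄_q`. -/
noncomputable def DGZ_Fbar (p n : ℕ) [Fact p.Prime]
    (F : MvPolynomial (Fin 3) (GaloisField p n)) :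
    MvPolynomial (Fin 3) (AlgebraicClosure (GaloisField p n)) :=
  MvPolynomial.map (algebraMap (GaloisField p n) (AlgebraicClosure (GaloisField p n))) F

open scoped Matrix

/-- Restriction of a polynomial to the parametrised line `t ↦ v + t w`, as a polynomial in `t`. -/
noncomputable def DGZ_line {k : Type*} [Field k] (v w : Fin 3 → k) :
    MvPolynomial (Fin 3) k →ₐ[k] Polynomial k :=
  aeval fun i => Polynomial.C (v i) + Polynomial.X * Polynomial.C (w i)

theorem DGZ_line_coeff_zero {k : Type*} [Field k] (v w : Fin 3 → k) (F : MvPolynomial (Fin 3) k) :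
    (DGZ_line v w F).coeff 0 = eval v F := by
  induction F using MvPolynomial.induction_on with
  | C a => simp [DGZ_line]
  | add f g hf hg => simp [hf, hg]
  | mul_X f i hf => simp [hf, Polynomial.mul_coeff_zero]; simp [DGZ_line]

/-- The linear coefficient of `F (v + t w)` is the directional derivative `∇F(v) ⬝ w`. -/
theorem DGZ_line_coeff_one {k : Type*} [Field k] (v w : Fin 3 → k) (F : MvPolynomial (Fin 3) k) :
    (DGZ_line v w F).coeff 1 = (fun i => eval v (pderiv i F)) ⬝ᵥ w := by
  induction F using MvPolynomial.induction_on with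
  | C a => simp [DGZ_line, dotProduct]
  | add f g hf hg => simp [hf, hg, dotProduct, add_mul, Finset.sum_add_distrib]
  | mul_X f i hf =>
    have h0 := DGZ_line_coeff_zero v w f
    have e0 : (DGZ_line v w (X i)).coeff 0 = v i := by simp [DGZ_line]
    have e1 : (DGZ_line v w (X i)).coeff 1 = w i := by simp [DGZ_line, Polynomial.coeff_C]
    rw [map_mul, Polynomial.mul_coeff_one, hf, h0, e0, e1]
    simp only [dotProduct, Fin.sum_univ_three, Derivation.leibniz, pderiv_X, smul_eq_mul, map_add,
      map_mul, eval_X]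
    fin_cases i <;> simp <;> ring

/-- The vectors off the plane `a ⬝ w = 0` span `k³`; test vectors `eᵢ` and `eᵢ + eⱼ` suffice. -/
theorem DGZ_eq_zero_of_generic {k : Type*} [Field k] {a g : Fin 3 → k} (ha : a ≠ 0)
    (h : ∀ w : Fin 3 → k, a ⬝ᵥ w ≠ 0 → g ⬝ᵥ w = 0) : g = 0 := by
  have h1 : ∀ i, a i ≠ 0 → g i = 0 := fun i hi => by
    simpa using h (Pi.single i 1) (by simpa using hi)
  obtain ⟨i, hi⟩ := Function.ne_iff.mp ha
  funext j
  by_cases hj : a j = 0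
  · have := h (Pi.single i 1 + Pi.single j 1) (by simpa [dotProduct_add, hj] using hi)
    simpa [dotProduct_add, h1 i hi] using this
  · exact h1 j hj

/-- The `p ^ n`-th power map is additive, so each entry of the restricted determinant is a binomial
in `t`. The cases `e = 2` and `e = 3` are `D₂` and `D₁`. -/
theorem DGZ_line_det {k : Type*} [Field k] (v w : Fin 3 → k) (p n e : ℕ) [Fact p.Prime] [CharP k p] :
    DGZ_line v w (Matrix.det (Matrix.of fun i j : Fin 3 =>
      (X i : MvPolynomial (Fin 3) k) ^ (![1, p ^ n, (p ^ n) ^ e] j))) =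
    Matrix.det (Matrix.of fun i j : Fin 3 =>
      ![Polynomial.C (v i) + Polynomial.X * Polynomial.C (w i),
        Polynomial.C (v i ^ p ^ n) + Polynomial.X ^ p ^ n * Polynomial.C (w i ^ p ^ n),
        Polynomial.C (v i ^ (p ^ n) ^ e) + Polynomial.X ^ (p ^ n) ^ e * Polynomial.C (w i ^ (p ^ n) ^ e)] j) := by
  rw [AlgHom.map_det]
  congr 1
  ext1 i j
  fin_cases j <;> simp [DGZ_line, ← pow_mul, add_pow_char_pow, mul_pow]
  all_goals exact mul_comm _ _


/-- Modulo `t³` only the first column of the determinant depends on `t`. -/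
theorem DGZ_line_det_order_one {k : Type*} [Field k] (v w : Fin 3 → k) (p n e : ℕ) [Fact p.Prime]
    [CharP k p] (hq : 2 < p ^ n) (he : e ≠ 0) :
    ∃ R : Polynomial k, DGZ_line v w (Matrix.det (Matrix.of fun i j : Fin 3 =>
      (X i : MvPolynomial (Fin 3) k) ^ (![1, p ^ n, (p ^ n) ^ e] j))) =
    Polynomial.C (((fun i => v i ^ p ^ n) ⨯₃ (fun i => v i ^ (p ^ n) ^ e)) ⬝ᵥ v) +
    Polynomial.X * Polynomial.C
      (((fun i => v i ^ p ^ n) ⨯₃ (fun i => v i ^ (p ^ n) ^ e)) ⬝ᵥ w) +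
    Polynomial.X ^ 3 * R := by
  rw [DGZ_line_det]
  have hqe : 3 ≤ (p ^ n) ^ e := hq.trans_le (Nat.le_self_pow he _)
  obtain ⟨s, hs⟩ := pow_dvd_pow (Polynomial.X : Polynomial k) (show 3 ≤ p ^ n from hq)
  obtain ⟨t, ht⟩ := pow_dvd_pow (Polynomial.X : Polynomial k) hqe
  rw [hs, ht]
  generalize hb : (fun i => v i ^ p ^ n) = b
  generalize hc : (fun i => v i ^ (p ^ n) ^ e) = c
  have hb' := congrFun hb
  have hc' := congrFun hc
  simp only [hb', hc']
  let α : Fin 3 → Polynomial k := fun i => Polynomial.C (v i) + Polynomial.X * Polynomial.C (w i)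
  let B : Fin 3 → Polynomial k := fun i => Polynomial.C (b i)
  let C : Fin 3 → Polynomial k := fun i => Polynomial.C (c i)
  let S : Fin 3 → Polynomial k := fun i => s * Polynomial.C (w i ^ p ^ n)
  let T : Fin 3 → Polynomial k := fun i => t * Polynomial.C (w i ^ (p ^ n) ^ e)
  refine ⟨(S ⨯₃ C) ⬝ᵥ α + (B ⨯₃ T) ⬝ᵥ α + Polynomial.X ^ 3 * (S ⨯₃ T) ⬝ᵥ α, ?_⟩
  simp [Matrix.det_fin_three, cross_apply, dotProduct, Fin.sum_univ_three, α, B, C, S, T]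
  ring

/-- If the second and third columns at `t = 0` are the multiples `c v` and `d v` of the first, the
determinant is divisible by `t ^ (q + 1)`: the lowest term takes `w` from the first column, its
`q`-th power from the second and `d v` from the third. -/
theorem DGZ_line_det_order_two {k : Type*} [Field k] (v w : Fin 3 → k) (p n e : ℕ) [Fact p.Prime]
    [CharP k p] (hq : 2 < p ^ n) (he : 2 ≤ e) (c d : k) (hc : ∀ i, v i ^ p ^ n = c * v i)
    (hd : ∀ i, v i ^ (p ^ n) ^ e = d * v i) :
    ∃ R : Polynomial k, DGZ_line v w (Matrix.det (Matrix.of fun i j : Fin 3 =>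
      (X i : MvPolynomial (Fin 3) k) ^ (![1, p ^ n, (p ^ n) ^ e] j))) =
    Polynomial.X ^ (p ^ n + 1) * (Polynomial.C
      (d * ((w ⨯₃ (fun i => w i ^ p ^ n)) ⬝ᵥ v)) + Polynomial.X * R) := by
  rw [DGZ_line_det]
  have hqe : p ^ n + 2 ≤ (p ^ n) ^ e := by
    calc p ^ n + 2 ≤ (p ^ n) ^ 2 := by nlinarith
      _ ≤ _ := Nat.pow_le_pow_right (by omega) he
  obtain ⟨t, ht⟩ := pow_dvd_pow (Polynomial.X : Polynomial k) hqe
  rw [ht]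
  simp only [hc, hd]
  let α : Fin 3 → Polynomial k := fun i => Polynomial.C (v i) + Polynomial.X * Polynomial.C (w i)
  let β : Fin 3 → Polynomial k := fun i =>
    Polynomial.C (c * v i) + Polynomial.X ^ p ^ n * Polynomial.C (w i ^ p ^ n)
  let T : Fin 3 → Polynomial k := fun i => t * Polynomial.C (w i ^ (p ^ n) ^ e)
  refine ⟨(α ⨯₃ β) ⬝ᵥ T, ?_⟩
  simp [Matrix.det_fin_three, cross_apply, dotProduct, Fin.sum_univ_three, α, β, T]
  ring

theorem DGZ_exists_scalar_iff {k : Type*} [Field k] {u w : Fin 3 → k} (hu : u ≠ 0) :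
    u ⨯₃ w = 0 ↔ ∃ c : k, w = c • u := by
  rw [← not_iff_not, ← ne_eq, crossProduct_ne_zero_iff_linearIndependent,
    LinearIndependent.pair_iff' hu]
  simp [eq_comm]

theorem DGZ_frobenius_cross {k : Type*} [Field k] (u w : Fin 3 → k) (p n : ℕ) [Fact p.Prime]
    [CharP k p] : (fun i => u i ^ p ^ n) ⨯₃ (fun i => w i ^ p ^ n) =
      fun i => (u ⨯₃ w) i ^ p ^ n := by
  funext i
  simp only [cross_apply]
  fin_cases i <;> simp [sub_pow_char_pow, mul_pow]

theorem DGZ_frobenius_cross_eq_zero {k : Type*} [Field k] (u w : Fin 3 → k) (p n : ℕ)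
    [Fact p.Prime] [CharP k p] :
    (fun i => u i ^ p ^ n) ⨯₃ (fun i => w i ^ p ^ n) = 0 ↔ u ⨯₃ w = 0 := by
  have : p ^ n ≠ 0 := pow_ne_zero _ (Fact.out : p.Prime).ne_zero
  rw [DGZ_frobenius_cross]
  simp only [funext_iff, Pi.zero_apply, pow_eq_zero_iff this]

/-- Some `w` spans with its Frobenius image a plane not orthogonal to `v`: with `a ^ q ≠ a`, let `w`
have entries `0, 1, a` in an order adapted to a nonzero coordinate of `v`. -/
theorem DGZ_exists_nonrational {k : Type*} [Field k] [IsAlgClosed k] (q : ℕ) (hq : 2 < q)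
    (v : Fin 3 → k) (hv : v ≠ 0) : ∃ w : Fin 3 → k, (w ⨯₃ (fun i => w i ^ q)) ⬝ᵥ v ≠ 0 := by
  obtain ⟨a, ha⟩ : ∃ a : k, a ^ q - a ≠ 0 := by
    obtain ⟨a, ha⟩ := IsAlgClosed.exists_root
      (Polynomial.X ^ q - Polynomial.X - Polynomial.C 1 : Polynomial k) (by
        apply Polynomial.degree_ne_of_natDegree_ne
        rw [Polynomial.natDegree_sub_C, FiniteField.X_pow_card_sub_X_natDegree_eq k (by omega)]
        exact Nat.ne_of_gt (lt_trans (by norm_num) hq))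
    refine ⟨a, ?_⟩
    simp only [Polynomial.IsRoot.def, Polynomial.eval_sub, Polynomial.eval_pow, Polynomial.eval_X,
      Polynomial.eval_C] at ha
    rw [sub_eq_zero.mp ha]
    exact one_ne_zero
  have ha' : a - a ^ q ≠ 0 := fun h => ha (by linear_combination -h)
  have hq0 : q ≠ 0 := by omega
  obtain ⟨i, hi⟩ := Function.ne_iff.mp hv
  fin_cases i
  · exact ⟨![0, 1, a], by simpa [cross_apply, dotProduct, Fin.sum_univ_three, hq0, ha] using hi⟩
  · exact ⟨![a, 0, 1], by simpa [cross_apply, dotProduct, Fin.sum_univ_three, hq0, ha] using hi⟩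
  · exact ⟨![1, a, 0], by simpa [cross_apply, dotProduct, Fin.sum_univ_three, hq0, ha] using hi⟩

theorem DGZ_low_coeffs {k : Type*} [Field k] {e₀ e₁ e₂ : k} {T : Polynomial k}
    (h : Polynomial.C e₀ + Polynomial.X * (Polynomial.C e₁ + Polynomial.X *
      (Polynomial.C e₂ + Polynomial.X * T)) = 0) : e₀ = 0 ∧ e₁ = 0 ∧ e₂ = 0 := by
  have h0 : e₀ = 0 := by simpa using congrArg (Polynomial.coeff · 0) h
  have h := (mul_eq_zero.mp (by simpa [h0] using h)).resolve_left Polynomial.X_ne_zero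
  have h1 : e₁ = 0 := by simpa using congrArg (Polynomial.coeff · 0) h
  have h := (mul_eq_zero.mp (by simpa [h1] using h)).resolve_left Polynomial.X_ne_zero
  exact ⟨h0, h1, by simpa using congrArg (Polynomial.coeff · 0) h⟩

/-- The singular-point criterion over an arbitrary algebraically closed field of characteristic
`p`. -/
theorem DGZ_singular_iff {k : Type*} [Field k] [IsAlgClosed k] (p n : ℕ) [Fact p.Prime]
    [CharP k p] (hq : 2 < p ^ n) (F : MvPolynomial (Fin 3) k)
    (hF : Matrix.det (Matrix.of fun i j : Fin 3 =>
        (X i : MvPolynomial (Fin 3) k) ^ (![1, p ^ n, (p ^ n) ^ 2] j)) * F =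
      Matrix.det (Matrix.of fun i j : Fin 3 =>
        (X i : MvPolynomial (Fin 3) k) ^ (![1, p ^ n, (p ^ n) ^ 3] j)))
    (v : Fin 3 → k) (hv : v ≠ 0) :
    (eval v F = 0 ∧ ∀ i : Fin 3, eval v (pderiv i F) = 0) ↔
      ((∃ c : k, (fun j => v j ^ (p ^ n) ^ 2) = c • v) ∧
        ¬ ∃ c : k, (fun j => v j ^ (p ^ n)) = c • v) := by
  have hq0 : p ^ n ≠ 0 := by omega
  have hline := fun w => congrArg (DGZ_line v w) hF
  simp only [map_mul] at hline
  have hlow := fun w => DGZ_line_det_order_one v w p n 2 hq (by norm_num)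
  have hlow' := fun w => DGZ_line_det_order_one v w p n 3 hq (by norm_num)
  rw [← DGZ_exists_scalar_iff hv, ← DGZ_exists_scalar_iff hv]
  have hA : (fun i => v i ^ p ^ n) ⨯₃ (fun i => v i ^ (p ^ n) ^ 2) = 0 ↔
      v ⨯₃ (fun i => v i ^ p ^ n) = 0 := by
    rw [← DGZ_frobenius_cross_eq_zero v _ p n]
    simp only [sq, pow_mul]
  have hB : (fun i => v i ^ p ^ n) ⨯₃ (fun i => v i ^ (p ^ n) ^ 3) = 0 ↔
      v ⨯₃ (fun i => v i ^ (p ^ n) ^ 2) = 0 := by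
    rw [← DGZ_frobenius_cross_eq_zero v _ p n]
    simp only [pow_succ _ 2, pow_mul _ ((p ^ n) ^ 2)]
  rw [← hA, ← hB]
  generalize ha : (fun i => v i ^ p ^ n) ⨯₃ (fun i => v i ^ (p ^ n) ^ 2) = a at *
  generalize hb : (fun i => v i ^ p ^ n) ⨯₃ (fun i => v i ^ (p ^ n) ^ 3) = b at *
  -- coefficients of `1`, `t` and (when `a ⬝ v = 0`) `t²` in `D₂ F = D₁` along `v + t w`
  have hcoef : ∀ w, (a ⬝ᵥ v) * eval v F = b ⬝ᵥ v ∧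
      (a ⬝ᵥ v) * ((fun i => eval v (pderiv i F)) ⬝ᵥ w) + (a ⬝ᵥ w) * eval v F = b ⬝ᵥ w ∧
      (a ⬝ᵥ v = 0 → (a ⬝ᵥ w) * ((fun i => eval v (pderiv i F)) ⬝ᵥ w) = 0) := by
    intro w
    obtain ⟨R, hR⟩ := hlow w
    obtain ⟨S, hS⟩ := hlow' w
    have h := hline w
    rw [hR, hS] at h
    rw [← DGZ_line_coeff_one, ← DGZ_line_coeff_zero v w]
    generalize DGZ_line v w F = G at h
    obtain ⟨g0, g1, g2, G', rfl⟩ : ∃ (g0 g1 g2 : k) (G' : Polynomial k), G =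
        Polynomial.C g0 + Polynomial.X * (Polynomial.C g1 + Polynomial.X * (Polynomial.C g2 +
          Polynomial.X * G')) := by
      refine ⟨G.coeff 0, G.divX.coeff 0, G.divX.divX.coeff 0, G.divX.divX.divX, ?_⟩
      simp only [add_comm (Polynomial.C _), Polynomial.X_mul_divX_add]
    have e0 : (Polynomial.C g0 + Polynomial.X * (Polynomial.C g1 + Polynomial.X *
        (Polynomial.C g2 + Polynomial.X * G'))).coeff 0 = g0 := by simp
    have e1 : (Polynomial.C g0 + Polynomial.X * (Polynomial.C g1 + Polynomial.X *
        (Polynomial.C g2 + Polynomial.X * G'))).coeff 1 = g1 := by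
      rw [show (1 : ℕ) = 0 + 1 from rfl, Polynomial.coeff_add, Polynomial.coeff_X_mul]
      simp
    rw [e0, e1]
    obtain ⟨h0, h1, h2⟩ := DGZ_low_coeffs (e₀ := a ⬝ᵥ v * g0 - b ⬝ᵥ v)
      (e₁ := a ⬝ᵥ v * g1 + a ⬝ᵥ w * g0 - b ⬝ᵥ w) (e₂ := a ⬝ᵥ v * g2 + a ⬝ᵥ w * g1)
      (T := (Polynomial.C (a ⬝ᵥ v) + Polynomial.X * Polynomial.C (a ⬝ᵥ w)) * G'
        + Polynomial.C (a ⬝ᵥ w * g2)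
        + R * (Polynomial.C g0 + Polynomial.X * (Polynomial.C g1 + Polynomial.X *
        (Polynomial.C g2 + Polynomial.X * G'))) - S) (by
      simp only [map_sub, map_add, map_mul]
      linear_combination h)
    refine ⟨sub_eq_zero.mp h0, sub_eq_zero.mp h1, fun hav => ?_⟩
    simpa [hav] using h2
  constructor
  · rintro ⟨h0, h1⟩
    have hb0 : b = 0 := dotProduct_eq_zero b fun w => by
      have := (hcoef w).2.1
      rw [h0, show (fun i => eval v (pderiv i F)) = 0 from funext h1] at this
      simpa using this.symm
    refine ⟨hb0, fun ha0 => ?_⟩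
    obtain ⟨c, hc⟩ := (DGZ_exists_scalar_iff hv).mp (hA.mp ha0)
    have hc1 : ∀ i, v i ^ p ^ n = c * v i := fun i => congrFun hc i
    have hc2 : ∀ i, v i ^ (p ^ n) ^ 2 = (c ^ p ^ n * c) * v i := fun i => by
      rw [sq, pow_mul, hc1, mul_pow, hc1, mul_assoc]
    have hc3 : ∀ i, v i ^ (p ^ n) ^ 3 = ((c ^ p ^ n * c) ^ p ^ n * c) * v i := fun i => by
      rw [pow_succ, pow_mul, hc2, mul_pow, hc1, mul_assoc]
    have hc0 : c ≠ 0 := by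
      rintro rfl
      exact hv (funext fun i => (pow_eq_zero_iff hq0).mp ((hc1 i).trans (zero_mul _)))
    obtain ⟨w, hw⟩ := DGZ_exists_nonrational (p ^ n) hq v hv
    obtain ⟨R, hR⟩ := DGZ_line_det_order_two v w p n 2 hq le_rfl _ _ hc1 hc2
    obtain ⟨S, hS⟩ := DGZ_line_det_order_two v w p n 3 hq (by norm_num) _ _ hc1 hc3
    have h := hline w
    rw [hR, hS, mul_assoc] at h
    have h := mul_left_cancel₀ (pow_ne_zero _ Polynomial.X_ne_zero) h
    have h := congrArg (Polynomial.coeff · 0) h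
    simp only [Polynomial.mul_coeff_zero, DGZ_line_coeff_zero, h0, mul_zero, Polynomial.coeff_add,
      Polynomial.coeff_C_zero, Polynomial.coeff_X_zero, zero_mul, add_zero] at h
    exact mul_ne_zero (mul_ne_zero (pow_ne_zero _ (mul_ne_zero (pow_ne_zero _ hc0) hc0)) hc0) hw
      h.symm
  · rintro ⟨hb0, ha0⟩
    subst hb0
    have hav : a ⬝ᵥ v = 0 := by
      obtain ⟨d, hd⟩ := (DGZ_exists_scalar_iff hv).mp (hB.mp rfl)
      rw [← ha, hd, map_smul, smul_dotProduct, dotProduct_comm, dot_cross_self, smul_zero]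
    have hF0 : eval v F = 0 := by
      obtain ⟨i, hi⟩ := Function.ne_iff.mp ha0
      have := (hcoef (Pi.single i 1)).2.1
      simp only [hav, zero_mul, zero_add, zero_dotProduct, mul_eq_zero] at this
      exact this.resolve_left (by simpa using hi)
    exact ⟨hF0, congrFun (DGZ_eq_zero_of_generic ha0 fun w haw =>
      (mul_eq_zero.mp ((hcoef w).2.2 hav)).resolve_left haw)⟩

/-- For `q > 2`, a point `P ∈ ℙ²(k)` (represented by a nonzero vector `v`) is a singular
point of the DGZ curve (i.e. `F` and its three partial derivatives vanish at `v`) if and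
only if `P ∈ ℙ²(𝔽_{q²}) \ ℙ²(𝔽_q)`, i.e. the coordinatewise `q²`-th power of `v` is
proportional to `v` but the coordinatewise `q`-th power of `v` is not. -/
theorem DGZ_singular_points (p n : ℕ) [Fact p.Prime] (hn : 0 < n) (hq : 2 < p ^ n)
    (F : MvPolynomial (Fin 3) (GaloisField p n)) (hF : DGZ_D2 p n * F = DGZ_D1 p n)
    (v : Fin 3 → AlgebraicClosure (GaloisField p n)) (hv : v ≠ 0) :
    (MvPolynomial.eval v (DGZ_Fbar p n F) = 0 ∧
        ∀ i : Fin 3, MvPolynomial.eval v (MvPolynomial.pderiv i (DGZ_Fbar p n F)) = 0) ↔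
      ((∃ c : AlgebraicClosure (GaloisField p n), (fun j => v j ^ (p ^ n) ^ 2) = c • v) ∧
        ¬ ∃ c : AlgebraicClosure (GaloisField p n), (fun j => v j ^ (p ^ n)) = c • v) := by
  have : CharP (GaloisField p n) p := inferInstance
  have : CharP (AlgebraicClosure (GaloisField p n)) p :=
    charP_of_injective_algebraMap (algebraMap (GaloisField p n) _).injective p
  have hmap : ∀ e : ℕ, MvPolynomial.map
      (algebraMap (GaloisField p n) (AlgebraicClosure (GaloisField p n)))
      (Matrix.det (Matrix.of fun i j : Fin 3 =>
        (X i : MvPolynomial (Fin 3) (GaloisField p n)) ^ (![1, p ^ n, (p ^ n) ^ e] j))) =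
      Matrix.det (Matrix.of fun i j : Fin 3 =>
        (X i : MvPolynomial (Fin 3) (AlgebraicClosure (GaloisField p n))) ^
          (![1, p ^ n, (p ^ n) ^ e] j)) := fun e => by
    rw [RingHom.map_det]
    congr 1
    ext1 i j
    simp
  refine DGZ_singular_iff p n hq _ ?_ v hv
  rw [← hmap 2, ← hmap 3, DGZ_Fbar, ← map_mul]
  exact congrArg _ hF
end

section
/- Let q > 2 be a prime power, k = 𝔽̄_q, and let F ∈ 𝔽_q[x,y,z] be the defining polynomial of the Dickson–Guralnick–Zieve curve C. Let Q be a singular point of C and ℓ ⊂ ℙ²(k) any line through Q. Then the intersection multiplicity ord_Q ℓ of ℓ with C at Q (the order of vanishing at the parameter of Q of the one-variable polynomial obtained by substituting a linear parametrization of ℓ into F) equals q−1 or q; moreover, if ord_Q ℓ = q, then ℓ is defined over 𝔽_q. -/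
/-!
Write `q = p ^ n`, and let a power of a vector be taken coordinatewise, so that
`D₁(r) = r ⬝ᵥ (r ^ q ⨯₃ r ^ q³)` and `D₂(r) = r ⬝ᵥ (r ^ q ⨯₃ r ^ q²)`.
Since `q`-th powers have zero derivative, applying `∂ᵢ` to `D₂ F = D₁` gives
`(r ^ q ⨯₃ r ^ q²)ᵢ F + D₂ ∂ᵢF = (r ^ q ⨯₃ r ^ q³)ᵢ` (`dgz_eval_mul` and `dgz_eval_pderiv`, for
points with coordinates in any algebra, in particular for `r = v + t w`).

At a singular point `v` the second identity gives `v ^ q ⨯₃ v ^ q³ = 0`, hence `v ^ q² = μ v`.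
If moreover `v ^ q` were proportional to `v`, then along a generic line through `v` both `D₁` and
`D₂` would vanish to order exactly `q + 1`, so `F(v) ≠ 0` (`dgz_rational_point`). Therefore
`a = v ⨯₃ v ^ q` is nonzero, and `a ^ q = -μ a`, so that `a` is proportional to a vector over `𝔽_q`:
it is the coefficient vector of an `𝔽_q`-rational line through `[v]`.

* If `w ⬝ᵥ a ≠ 0`, then along `v + t w` the order of `D₂` is `1` and that of `D₁` is `q`, so the
  order of `F` is `q - 1` (`dgz_transversal`).
* If `w ⬝ᵥ a = 0`, then `D₂` vanishes identically on `v + t w`. The second identity becomes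
  `(r ^ q ⨯₃ r ^ q²)ᵢ F = (r ^ q ⨯₃ r ^ q³)ᵢ`; for `aᵢ ≠ 0` the left factor is nonzero at `t = 0`
  and the right side has order `q`, so the order of `F` is `q` (`dgz_tangent`).
-/

open MvPolynomial

/-- The one-variable polynomial obtained by substituting the linear parametrization
`t ↦ v + t • w` of a line into the defining polynomial `F` of the DGZ curve; its order of
vanishing at `t = 0` is the intersection multiplicity of the line with the curve at `[v]`. -/
noncomputable def DGZ_lineRestriction (p n : ℕ) [Fact p.Prime]
    (F : MvPolynomial (Fin 3) (GaloisField p n))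
    (v w : Fin 3 → AlgebraicClosure (GaloisField p n)) :
    Polynomial (AlgebraicClosure (GaloisField p n)) :=
  MvPolynomial.aeval (fun i : Fin 3 => Polynomial.C (v i) + Polynomial.C (w i) * Polynomial.X)
    (DGZ_Fbar p n F)

/-! ### The identity `D₂ F = D₁`, its partial derivatives, and linear algebra in dimension three -/

open Matrix in
/-- The identity `D₂ F = D₁` at a point `r` with coordinates in an arbitrary `𝔽_q`-algebra. -/
theorem dgz_eval_mul (p n : ℕ) [Fact p.Prime]
    (F : MvPolynomial (Fin 3) (GaloisField p n)) (hF : DGZ_D2 p n * F = DGZ_D1 p n)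
    {R : Type*} [CommRing R] [Algebra (GaloisField p n) R] (r : Fin 3 → R) :
    (r ⬝ᵥ ((r ^ p ^ n) ⨯₃ (r ^ (p ^ n) ^ 2))) * aeval r F =
      r ⬝ᵥ ((r ^ p ^ n) ⨯₃ (r ^ (p ^ n) ^ 3)) := by
  have h := congrArg (aeval r) hF
  simp only [DGZ_D1, DGZ_D2, det_fin_three, map_mul, map_sub, map_add, map_pow, aeval_X,
    Matrix.of_apply, Matrix.cons_val_zero, Matrix.cons_val_one, Matrix.cons_val, pow_one] at h
  simp only [cross_apply, vec3_dotProduct, Pi.pow_apply, Matrix.cons_val_zero,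
    Matrix.cons_val_one, Matrix.cons_val]
  linear_combination h

theorem dgz_pderiv_X_pow (p n : ℕ) [Fact p.Prime] (hn : 0 < n) (i j : Fin 3) (k : ℕ)
    (hk : k ≠ 0) :
    pderiv i ((X j : MvPolynomial (Fin 3) (GaloisField p n)) ^ (p ^ n) ^ k) = 0 := by
  rw [pderiv_pow, Nat.cast_pow, Nat.cast_pow, CharP.cast_eq_zero, zero_pow hn.ne', zero_pow hk]
  simp

open Matrix in
/-- The `i`-th partial derivative of `D₂ F = D₁` at a point `r`: only the first column of each
determinant has a nonzero derivative. -/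
theorem dgz_eval_pderiv (p n : ℕ) [Fact p.Prime] (hn : 0 < n)
    (F : MvPolynomial (Fin 3) (GaloisField p n)) (hF : DGZ_D2 p n * F = DGZ_D1 p n)
    {R : Type*} [CommRing R] [Algebra (GaloisField p n) R] (r : Fin 3 → R) (i : Fin 3) :
    ((r ^ p ^ n) ⨯₃ (r ^ (p ^ n) ^ 2)) i * aeval r F +
      (r ⬝ᵥ ((r ^ p ^ n) ⨯₃ (r ^ (p ^ n) ^ 2))) * aeval r (pderiv i F) =
      ((r ^ p ^ n) ⨯₃ (r ^ (p ^ n) ^ 3)) i := by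
  have h := congrArg (fun P => aeval r (pderiv i P)) hF
  have h1 : ∀ j, pderiv i ((X j : MvPolynomial (Fin 3) (GaloisField p n)) ^ p ^ n) = 0 :=
    fun j => by simpa using dgz_pderiv_X_pow p n hn i j 1 one_ne_zero
  have h2 := fun j => dgz_pderiv_X_pow p n hn i j 2 two_ne_zero
  have h3 := fun j => dgz_pderiv_X_pow p n hn i j 3 three_ne_zero
  simp only [DGZ_D1, DGZ_D2, det_fin_three, Matrix.of_apply, Matrix.cons_val_zero,
    Matrix.cons_val_one, Matrix.cons_val, pow_one, pderiv_mul, map_sub, map_add, h1, h2, h3,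
    mul_zero, add_zero, map_mul, map_pow, aeval_X, pderiv_X] at h
  fin_cases i <;>
  · simp at h
    simp only [cross_apply, vec3_dotProduct, Pi.pow_apply, Matrix.cons_val_zero,
      Matrix.cons_val_one, Matrix.cons_val, Fin.zero_eta, Fin.mk_one, Fin.reduceFinMk]
    linear_combination h

/-- If `G f = t ^ j H` with `G` and `H` units at `0`, then `f` vanishes to order `j` at `0`. -/
theorem dgz_rootMultiplicity {K : Type*} [Field K] {f G H : Polynomial K} {j : ℕ}
    (h : G * f = Polynomial.X ^ j * H) (hG : G.eval 0 ≠ 0) (hH : H.eval 0 ≠ 0) :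
    f.rootMultiplicity 0 = j := by
  have hH0 : H ≠ 0 := by rintro rfl; simp at hH
  have hr : Polynomial.X ^ j * H ≠ 0 := mul_ne_zero (pow_ne_zero _ Polynomial.X_ne_zero) hH0
  have e := congrArg (Polynomial.rootMultiplicity 0) h
  rw [Polynomial.rootMultiplicity_mul (h ▸ hr), Polynomial.rootMultiplicity_mul hr,
    Polynomial.rootMultiplicity_eq_zero hG, Polynomial.rootMultiplicity_eq_zero hH] at e
  have : (Polynomial.X ^ j : Polynomial K).rootMultiplicity 0 = j := by
    simpa using Polynomial.rootMultiplicity_X_sub_C_pow (0 : K) j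
  omega

open Matrix in
/-- The Frobenius map `x ↦ x ^ q` commutes with the cross product. -/
theorem dgz_cross_pow {p n : ℕ} [Fact p.Prime] {R : Type*} [CommRing R] [CharP R p]
    (x y : Fin 3 → R) : (x ⨯₃ y) ^ p ^ n = (x ^ p ^ n) ⨯₃ (y ^ p ^ n) := by
  funext i
  fin_cases i <;> simp [cross_apply, sub_pow_char_pow, mul_pow]

open Matrix in
theorem dgz_dot_pow {p n : ℕ} [Fact p.Prime] {R : Type*} [CommRing R] [CharP R p]
    (x y : Fin 3 → R) : (x ⬝ᵥ y) ^ p ^ n = (x ^ p ^ n) ⬝ᵥ (y ^ p ^ n) := by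
  simp [vec3_dotProduct, add_pow_char_pow, mul_pow]

open Matrix in
theorem dgz_exists_smul {K : Type*} [Field K] {x y : Fin 3 → K} (hx : x ≠ 0)
    (h : x ⨯₃ y = 0) : ∃ c : K, y = c • x := by
  obtain ⟨m, hm⟩ := Function.ne_iff.mp hx
  have h0 := congrFun h 0
  have h1 := congrFun h 1
  have h2 := congrFun h 2
  simp only [cross_apply, Matrix.cons_val_zero, Matrix.cons_val_one, Matrix.cons_val,
    Pi.zero_apply] at h0 h1 h2 hm
  refine ⟨y m / x m, ?_⟩
  funext i
  rw [Pi.smul_apply, smul_eq_mul, div_mul_eq_mul_div, eq_div_iff hm]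
  fin_cases m <;> fin_cases i <;> simp <;>
    first | ring1 | linear_combination h0 | linear_combination -h0 | linear_combination h1 |
      linear_combination -h1 | linear_combination h2 | linear_combination -h2

open Matrix in
/-- Cramer's rule: three vectors orthogonal to a common nonzero vector are dependent. -/
theorem dgz_triple_eq_zero {R : Type*} [CommRing R] [IsDomain R] {a x y z : Fin 3 → R}
    {i : Fin 3} (ha : a i ≠ 0) (hx : x ⬝ᵥ a = 0) (hy : y ⬝ᵥ a = 0) (hz : z ⬝ᵥ a = 0) :
    x ⬝ᵥ (y ⨯₃ z) = 0 := by
  apply (mul_eq_zero.mp _).resolve_left ha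
  have e : a i * (x ⬝ᵥ (y ⨯₃ z)) = (x ⬝ᵥ a) * (y ⨯₃ z) i + (y ⬝ᵥ a) * (z ⨯₃ x) i +
      (z ⬝ᵥ a) * (x ⨯₃ y) i := by
    fin_cases i <;>
    · simp only [cross_apply, vec3_dotProduct, Matrix.cons_val_zero, Matrix.cons_val_one,
        Matrix.cons_val, Fin.zero_eta, Fin.mk_one, Fin.reduceFinMk]
      ring
  rw [e, hx, hy, hz]; ring

/-! ### Parametrized lines -/

/-- The vector of constant polynomials with entries `x i`. -/
noncomputable def dgzConst {K : Type*} [Field K] (x : Fin 3 → K) : Fin 3 → Polynomial K :=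
  fun i => Polynomial.C (x i)

/-- The parametrized line `t ↦ v + t • w`, as a vector with polynomial entries. -/
noncomputable def dgzLine {K : Type*} [Field K] (v w : Fin 3 → K) : Fin 3 → Polynomial K :=
  dgzConst v + (Polynomial.X : Polynomial K) • dgzConst w

/-- The `q^k`-power Frobenius is additive, so it acts on the coefficients and the parameter of a
line separately. -/
theorem dgz_line_pow {p n : ℕ} [Fact p.Prime] {K : Type*} [Field K] [CharP K p]
    (v w : Fin 3 → K) (k : ℕ) :
    dgzLine v w ^ (p ^ n) ^ k = dgzConst (v ^ (p ^ n) ^ k) +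
      (Polynomial.X ^ (p ^ n) ^ k : Polynomial K) • dgzConst (w ^ (p ^ n) ^ k) := by
  funext i
  simp only [dgzLine, dgzConst, Pi.pow_apply, Pi.add_apply, Pi.smul_apply, smul_eq_mul]
  rw [← pow_mul, add_pow_char_pow, mul_pow, Polynomial.C_pow, Polynomial.C_pow]

theorem dgz_const_smul {K : Type*} [Field K] (c : K) (x : Fin 3 → K) :
    dgzConst (c • x) = Polynomial.C c • dgzConst x := by
  funext i; simp [dgzConst]

open Matrix in
theorem dgz_const_cross {K : Type*} [Field K] (x y : Fin 3 → K) :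
    dgzConst x ⨯₃ dgzConst y = dgzConst (x ⨯₃ y) := by
  funext i; fin_cases i <;> simp [dgzConst, cross_apply]

open Matrix in
theorem dgz_const_dot {K : Type*} [Field K] (x y : Fin 3 → K) :
    dgzConst x ⬝ᵥ dgzConst y = Polynomial.C (x ⬝ᵥ y) := by
  simp [dgzConst, vec3_dotProduct]

/-! ### Expansions of `D₁` and `D₂` in the line parameter -/

section expansions

open Matrix

variable {R : Type*} [CommRing R] (V W V₁ W₁ U : Fin 3 → R) (T A B m c : R)

-- In these identities `V`, `W` stand for `v`, `w`, then `V₁`, `W₁` for their `q`-th powers and `U`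
-- for a `q²`-th or `q³`-th power of `w`; `T` is the line parameter and `A = T ^ q`.
theorem dgz_expand_transversal_D2 :
    (V + T • W) ⬝ᵥ ((V₁ + A • W₁) ⨯₃ (m • V + (T * B) • U)) =
      T * (-(m * (W ⬝ᵥ (V ⨯₃ V₁))) + A * (m * (W ⬝ᵥ (W₁ ⨯₃ V))) +
        B * ((V + T • W) ⬝ᵥ ((V₁ + A • W₁) ⨯₃ U))) := by
  simp only [cross_apply, vec3_dotProduct, Pi.add_apply, Pi.smul_apply, smul_eq_mul,
    Matrix.cons_val_zero, Matrix.cons_val_one, Matrix.cons_val]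
  ring

theorem dgz_expand_transversal_D1 :
    (V + T • W) ⬝ᵥ ((V₁ + A • W₁) ⨯₃ (c • V₁ + (A * B) • U)) =
      A * (-(c * (W₁ ⬝ᵥ (V ⨯₃ V₁))) + T * (c * (W ⬝ᵥ (W₁ ⨯₃ V₁))) +
        B * ((V + T • W) ⬝ᵥ ((V₁ + A • W₁) ⨯₃ U))) := by
  simp only [cross_apply, vec3_dotProduct, Pi.add_apply, Pi.smul_apply, smul_eq_mul,
    Matrix.cons_val_zero, Matrix.cons_val_one, Matrix.cons_val]
  ring

theorem dgz_expand_rational_point :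
    (V + T • W) ⬝ᵥ ((c • V + A • W₁) ⨯₃ (m • V + (T * A * B) • U)) =
      T * A * (m * (W ⬝ᵥ (W₁ ⨯₃ V)) + B * ((V + T • W) ⬝ᵥ ((c • V + A • W₁) ⨯₃ U))) := by
  simp only [cross_apply, vec3_dotProduct, Pi.add_apply, Pi.smul_apply, smul_eq_mul,
    Matrix.cons_val_zero, Matrix.cons_val_one, Matrix.cons_val]
  ring

theorem dgz_expand_cross_D2 :
    (V₁ + A • W₁) ⨯₃ (m • V + B • U) =
      -(m • (V ⨯₃ V₁)) + A • (m • (W₁ ⨯₃ V)) + B • ((V₁ + A • W₁) ⨯₃ U) := by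
  funext i
  fin_cases i <;>
  · simp only [cross_apply, Pi.add_apply, Pi.smul_apply, smul_eq_mul, Pi.neg_apply,
      Matrix.cons_val_zero, Matrix.cons_val_one, Matrix.cons_val, Fin.zero_eta, Fin.mk_one,
      Fin.reduceFinMk]
    ring

theorem dgz_expand_cross_D1 :
    (V₁ + A • W₁) ⨯₃ (c • V₁ + (A * B) • U) =
      A • (c • (W₁ ⨯₃ V₁) + B • ((V₁ + A • W₁) ⨯₃ U)) := by
  funext i
  fin_cases i <;>
  · simp only [cross_apply, Pi.add_apply, Pi.smul_apply, smul_eq_mul,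
      Matrix.cons_val_zero, Matrix.cons_val_one, Matrix.cons_val, Fin.zero_eta, Fin.mk_one,
      Fin.reduceFinMk]
    ring

end expansions

/-! ### Orders of vanishing along lines -/

section local_computation

open Matrix

variable {p n : ℕ} [Fact p.Prime] {K : Type*} [Field K] [CharP K p]

/-- A polynomial `f` with `D₂(v + tw) f = D₁(v + tw)` does not vanish at `0` when `v` is
proportional to a rational vector and `w` is generic. -/
theorem dgz_rational_point (hq : 2 < p ^ n) {v w : Fin 3 → K} {ν : K} (hν : ν ≠ 0)
    (hv : v ^ p ^ n = ν • v) (hw : w ⬝ᵥ ((w ^ p ^ n) ⨯₃ v) ≠ 0) {f : Polynomial K}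
    (h : (dgzLine v w ⬝ᵥ ((dgzLine v w ^ p ^ n) ⨯₃ (dgzLine v w ^ (p ^ n) ^ 2))) * f =
      dgzLine v w ⬝ᵥ ((dgzLine v w ^ p ^ n) ⨯₃ (dgzLine v w ^ (p ^ n) ^ 3))) :
    f.eval 0 ≠ 0 := by
  have hvk : ∀ k, ∃ m : K, m ≠ 0 ∧ v ^ (p ^ n) ^ k = m • v := by
    intro k
    induction k with
    | zero => exact ⟨1, one_ne_zero, by simp⟩
    | succ k ih =>
      obtain ⟨m, hm, e⟩ := ih
      exact ⟨m ^ p ^ n * ν, mul_ne_zero (pow_ne_zero _ hm) hν, by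
        rw [pow_succ, pow_mul, e, smul_pow, hv, smul_smul]⟩
  obtain ⟨m₂, hm₂, e₂⟩ := hvk 2
  obtain ⟨m₃, hm₃, e₃⟩ := hvk 3
  have l₁ := dgz_line_pow (p := p) (n := n) v w 1
  rw [pow_one, hv, dgz_const_smul] at l₁
  have l₂ := dgz_line_pow (p := p) (n := n) v w 2
  have l₃ := dgz_line_pow (p := p) (n := n) v w 3
  rw [e₂, dgz_const_smul] at l₂
  rw [e₃, dgz_const_smul] at l₃
  generalize p ^ n = q at *
  obtain ⟨b₂, hb₂⟩ : ∃ b, q ^ 2 = 1 + q + (b + 1) := ⟨q ^ 2 - q - 2, by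
    have : q + 2 ≤ q ^ 2 := by nlinarith
    omega⟩
  obtain ⟨b₃, hb₃⟩ : ∃ b, q ^ 3 = 1 + q + (b + 1) := ⟨q ^ 3 - q - 2, by
    have : q + 2 ≤ q ^ 2 := by nlinarith
    have : q ^ 2 ≤ q ^ 3 := Nat.pow_le_pow_right (by omega) (by omega)
    omega⟩
  have x₂ : (Polynomial.X : Polynomial K) ^ q ^ 2 =
      Polynomial.X * Polynomial.X ^ q * Polynomial.X ^ (b₂ + 1) := by
    rw [hb₂, pow_add, pow_add, pow_one]
  have x₃ : (Polynomial.X : Polynomial K) ^ q ^ 3 =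
      Polynomial.X * Polynomial.X ^ q * Polynomial.X ^ (b₃ + 1) := by
    rw [hb₃, pow_add, pow_add, pow_one]
  rw [l₁, l₂, l₃, x₂, x₃, dgzLine, dgz_expand_rational_point, dgz_expand_rational_point,
    dgz_const_cross, dgz_const_dot, mul_assoc] at h
  have h' := mul_left_cancel₀
    (mul_ne_zero Polynomial.X_ne_zero (pow_ne_zero q Polynomial.X_ne_zero)) h
  have e := congrArg (Polynomial.eval 0) h'
  simp only [Polynomial.eval_mul, Polynomial.eval_add, Polynomial.eval_C, Polynomial.eval_pow,
    Polynomial.eval_X, zero_pow (Nat.succ_ne_zero _), zero_mul, add_zero] at e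
  intro hf
  rw [hf, mul_zero] at e
  exact mul_ne_zero hm₃ hw e.symm

/-- Along a line through an `𝔽_{q²}`-rational point `[v]`, other than the line joining `[v]` to its
Frobenius conjugate, the multiplicity is `q - 1`. -/
theorem dgz_transversal (hq : 2 < p ^ n) {v w : Fin 3 → K} {μ : K} (hμ : μ ≠ 0)
    (hv : v ^ (p ^ n) ^ 2 = μ • v) (hw : w ⬝ᵥ (v ⨯₃ (v ^ p ^ n)) ≠ 0)
    (hw₁ : (w ^ p ^ n) ⬝ᵥ (v ⨯₃ (v ^ p ^ n)) ≠ 0) {f : Polynomial K}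
    (h : (dgzLine v w ⬝ᵥ ((dgzLine v w ^ p ^ n) ⨯₃ (dgzLine v w ^ (p ^ n) ^ 2))) * f =
      dgzLine v w ⬝ᵥ ((dgzLine v w ^ p ^ n) ⨯₃ (dgzLine v w ^ (p ^ n) ^ 3))) :
    f.rootMultiplicity 0 = p ^ n - 1 := by
  have hv₃ : v ^ (p ^ n) ^ 3 = μ ^ p ^ n • v ^ p ^ n := by
    rw [pow_succ (p ^ n) 2, pow_mul, hv, smul_pow]
  have l₁ := dgz_line_pow (p := p) (n := n) v w 1
  rw [pow_one] at l₁
  have l₂ := dgz_line_pow (p := p) (n := n) v w 2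
  have l₃ := dgz_line_pow (p := p) (n := n) v w 3
  rw [hv, dgz_const_smul] at l₂
  rw [hv₃, dgz_const_smul] at l₃
  generalize p ^ n = q at *
  obtain ⟨b₂, hb₂⟩ : ∃ b, q ^ 2 = 1 + (b + 1) := ⟨q ^ 2 - 2, by
    have : q + 2 ≤ q ^ 2 := by nlinarith
    omega⟩
  obtain ⟨b₃, hb₃⟩ : ∃ b, q ^ 3 = q + (b + 1) := ⟨q ^ 3 - q - 1, by
    have : q + 2 ≤ q ^ 2 := by nlinarith
    have : q ^ 2 ≤ q ^ 3 := Nat.pow_le_pow_right (by omega) (by omega)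
    omega⟩
  have hq1 : (Polynomial.X : Polynomial K) ^ q = Polynomial.X * Polynomial.X ^ (q - 1) := by
    rw [← pow_succ', Nat.sub_add_cancel (by omega)]
  have hq0 : q ≠ 0 := by omega
  rw [l₁, l₂, l₃, hb₂, hb₃, pow_add _ 1, pow_add _ q, pow_one, dgzLine,
    dgz_expand_transversal_D2, dgz_expand_transversal_D1] at h
  simp only [dgz_const_cross, dgz_const_dot] at h
  conv_rhs at h => lhs; rw [hq1]
  rw [mul_assoc, mul_assoc] at h
  refine dgz_rootMultiplicity (mul_left_cancel₀ Polynomial.X_ne_zero h) ?_ ?_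
  · simpa [hq0] using ⟨hμ, hw⟩
  · simpa [hq0] using ⟨hμ, hw₁⟩

/-- Along the line joining an `𝔽_{q²}`-rational point `[v]` to its Frobenius conjugate, on which
`D₂` and `D₁` vanish identically, the multiplicity is read off from the partial derivatives: it
is `q`. -/
theorem dgz_tangent (hq : 2 < p ^ n) {v w : Fin 3 → K} {μ : K} (hμ : μ ≠ 0)
    (hv : v ^ (p ^ n) ^ 2 = μ • v) {i : Fin 3} (ha : (v ⨯₃ (v ^ p ^ n)) i ≠ 0)
    (hw : (w ⨯₃ v) i ≠ 0) {f : Polynomial K}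
    (h : ((dgzLine v w ^ p ^ n) ⨯₃ (dgzLine v w ^ (p ^ n) ^ 2)) i * f =
      ((dgzLine v w ^ p ^ n) ⨯₃ (dgzLine v w ^ (p ^ n) ^ 3)) i) :
    f.rootMultiplicity 0 = p ^ n := by
  have hv₃ : v ^ (p ^ n) ^ 3 = μ ^ p ^ n • v ^ p ^ n := by
    rw [pow_succ (p ^ n) 2, pow_mul, hv, smul_pow]
  have hw₁ : ((w ^ p ^ n) ⨯₃ (v ^ p ^ n)) i ≠ 0 := by
    rw [← dgz_cross_pow, Pi.pow_apply]
    exact pow_ne_zero _ hw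
  have l₁ := dgz_line_pow (p := p) (n := n) v w 1
  rw [pow_one] at l₁
  have l₂ := dgz_line_pow (p := p) (n := n) v w 2
  have l₃ := dgz_line_pow (p := p) (n := n) v w 3
  rw [hv, dgz_const_smul] at l₂
  rw [hv₃, dgz_const_smul] at l₃
  generalize p ^ n = q at *
  obtain ⟨b₃, hb₃⟩ : ∃ b, q ^ 3 = q + (b + 1) := ⟨q ^ 3 - q - 1, by
    have : q + 2 ≤ q ^ 2 := by nlinarith
    have : q ^ 2 ≤ q ^ 3 := Nat.pow_le_pow_right (by omega) (by omega)
    omega⟩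
  have hq0 : q ≠ 0 := by omega
  rw [l₁, l₂, l₃, hb₃, pow_add _ q, dgz_expand_cross_D2, dgz_expand_cross_D1] at h
  simp only [dgz_const_cross, Pi.add_apply, Pi.smul_apply, Pi.neg_apply, smul_eq_mul] at h
  refine dgz_rootMultiplicity h ?_ ?_
  · simpa [hq0, dgzConst] using ⟨hμ, ha⟩
  · simpa [hq0, dgzConst] using ⟨hμ, hw₁⟩

end local_computation

/-! ### Two facts on the algebraic closure of `𝔽_q` -/

/-- Fixed points of the `q`-Frobenius on the algebraic closure come from `𝔽_q`. -/
theorem dgz_mem_range {p n : ℕ} [Fact p.Prime] (hn : 0 < n)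
    {b : AlgebraicClosure (GaloisField p n)} (hb : b ^ p ^ n = b) :
    ∃ a : GaloisField p n, algebraMap _ (AlgebraicClosure (GaloisField p n)) a = b := by
  have : Fintype (GaloisField p n) := Fintype.ofFinite _
  have hc : Fintype.card (GaloisField p n) = p ^ n := by
    rw [← Nat.card_eq_fintype_card, GaloisField.card p n hn.ne']
  have hs : (Polynomial.X ^ Fintype.card (GaloisField p n) - Polynomial.X :
      Polynomial (GaloisField p n)).Splits := by
    rw [Polynomial.splits_iff_card_roots, FiniteField.roots_X_pow_card_sub_X,
      FiniteField.X_pow_card_sub_X_natDegree_eq _ Fintype.one_lt_card]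
    rfl
  apply hs.mem_range_of_isRoot
  · exact FiniteField.X_pow_card_sub_X_ne_zero _ Fintype.one_lt_card
  · simp [hc, hb]

open Matrix in
/-- The form `w ↦ det (w, w ^ q, v)` is not identically zero; it gives the lines used to show that
`F` does not vanish at rational points. -/
theorem dgz_exists_generic {p n : ℕ} [Fact p.Prime] {K : Type*} [Field K] [IsAlgClosed K]
    [CharP K p] (hn : 0 < n) {v : Fin 3 → K} (hv : v ≠ 0) :
    ∃ w : Fin 3 → K, w ⬝ᵥ ((w ^ p ^ n) ⨯₃ v) ≠ 0 := by
  have hp := (Fact.out : p.Prime)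
  have hq0 : p ^ n ≠ 0 := pow_ne_zero _ hp.ne_zero
  obtain ⟨m, hm⟩ := Function.ne_iff.mp hv
  obtain ⟨θ, hθ⟩ : ∃ θ : K, θ ^ p ^ n - θ = 1 := by
    obtain ⟨θ, hθ⟩ := IsAlgClosed.exists_root
      ((Polynomial.X ^ p ^ n - Polynomial.X : Polynomial K) - Polynomial.C 1) (by
        intro h
        have := Polynomial.natDegree_eq_of_degree_eq_some h
        rw [Polynomial.natDegree_sub_C,
          FiniteField.X_pow_card_pow_sub_X_natDegree_eq K hn.ne' hp.one_lt] at this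
        exact hq0 this)
    exact ⟨θ, by simpa [sub_eq_zero] using hθ⟩
  have hθ' : θ ^ p ^ n = 1 + θ := by linear_combination hθ
  have h0 : (0 : K) ^ p ^ n = 0 := zero_pow hq0
  -- `w` is chosen so that `w ⨯₃ w ^ q` is the `m`-th basis vector.
  have key : ∃ w : Fin 3 → K, w ⬝ᵥ ((w ^ p ^ n) ⨯₃ v) = v m := by
    fin_cases m
    · refine ⟨![0, 1, θ], ?_⟩
      simp [cross_apply, h0, hθ']
      ring
    · refine ⟨![θ, 0, 1], ?_⟩
      simp [cross_apply, h0, hθ']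
      ring
    · refine ⟨![1, θ, 0], ?_⟩
      simp [cross_apply, h0, hθ']
      ring
  obtain ⟨w, hw⟩ := key
  exact ⟨w, hw ▸ hm⟩

/-! ### Multiplicities at singular points -/

open Matrix

/-- For `q > 2`, let `Q = [v]` be a singular point of the DGZ curve and `ℓ` any line through
`Q`, spanned by `v` and a vector `w` not proportional to `v`.  Then the intersection
multiplicity `ord_Q ℓ` equals `q − 1` or `q`, and if it equals `q` then `ℓ` is defined
over `𝔽_q` (it is the zero set of a linear form with coefficients in `𝔽_q`). -/
theorem DGZ_line_multiplicity_at_singular (p n : ℕ) [Fact p.Prime] (hn : 0 < n)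
    (hq : 2 < p ^ n)
    (F : MvPolynomial (Fin 3) (GaloisField p n)) (hF : DGZ_D2 p n * F = DGZ_D1 p n)
    (v : Fin 3 → AlgebraicClosure (GaloisField p n)) (hv : v ≠ 0)
    (hsing : MvPolynomial.eval v (DGZ_Fbar p n F) = 0 ∧
      ∀ i : Fin 3, MvPolynomial.eval v (MvPolynomial.pderiv i (DGZ_Fbar p n F)) = 0)
    (w : Fin 3 → AlgebraicClosure (GaloisField p n))
    (hw : ¬ ∃ c : AlgebraicClosure (GaloisField p n), w = c • v) :
    ((DGZ_lineRestriction p n F v w).rootMultiplicity 0 = p ^ n - 1 ∨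
      (DGZ_lineRestriction p n F v w).rootMultiplicity 0 = p ^ n) ∧
    ((DGZ_lineRestriction p n F v w).rootMultiplicity 0 = p ^ n →
      ∃ a : Fin 3 → GaloisField p n, a ≠ 0 ∧
        (∑ i : Fin 3, algebraMap (GaloisField p n) (AlgebraicClosure (GaloisField p n)) (a i) * v i = 0) ∧
        (∑ i : Fin 3, algebraMap (GaloisField p n) (AlgebraicClosure (GaloisField p n)) (a i) * w i = 0)) := by
  have hp := (Fact.out : p.Prime)
  have hq0 : p ^ n ≠ 0 := by omega
  have : CharP (AlgebraicClosure (GaloisField p n)) p :=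
    charP_of_injective_algebraMap
      (algebraMap (GaloisField p n) (AlgebraicClosure (GaloisField p n))).injective p
  have hres : ∀ u, DGZ_lineRestriction p n F v u = aeval (dgzLine v u) F := by
    intro u
    have e : (fun i : Fin 3 => Polynomial.C (v i) + Polynomial.C (u i) * Polynomial.X) =
        dgzLine v u := by
      funext i
      simp only [dgzLine, dgzConst, Pi.add_apply, Pi.smul_apply, smul_eq_mul]
      rw [mul_comm Polynomial.X]
    rw [DGZ_lineRestriction, DGZ_Fbar, e, aeval_map_algebraMap]
  have hF0 : aeval v F = 0 := by
    rw [aeval_def, ← eval_map]; exact hsing.1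
  have hdF0 : ∀ i, aeval v (pderiv i F) = 0 := by
    intro i
    rw [aeval_def, ← eval_map, ← pderiv_map]; exact hsing.2 i
  have hE := fun u => dgz_eval_mul p n F hF (dgzLine v u)
  -- Since `F` and its partial derivatives vanish at `v`, so do those of `D₁`; taking `q`-th roots,
  -- `v` is proportional to `v ^ q²`.
  have h13 : (v ^ p ^ n) ⨯₃ (v ^ (p ^ n) ^ 3) = 0 := by
    funext i
    have := dgz_eval_pderiv p n hn F hF v i
    rw [hF0, hdF0, mul_zero, mul_zero, add_zero] at this
    exact this.symm
  have h02 : v ⨯₃ (v ^ (p ^ n) ^ 2) = 0 := by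
    have e : (v ⨯₃ (v ^ (p ^ n) ^ 2)) ^ p ^ n = 0 := by
      rw [dgz_cross_pow, ← pow_mul, ← pow_succ, h13]
    funext i
    exact eq_zero_of_pow_eq_zero (congrFun e i)
  obtain ⟨μ, hμv⟩ := dgz_exists_smul hv h02
  obtain ⟨m, hm⟩ := Function.ne_iff.mp hv
  have hμ : μ ≠ 0 := by
    rintro rfl
    have := congrFun hμv m
    rw [zero_smul] at this
    exact hm (eq_zero_of_pow_eq_zero this)
  -- `[v]` is not `𝔽_q`-rational, because `F` does not vanish at rational points.
  have ha : v ⨯₃ (v ^ p ^ n) ≠ 0 := by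
    intro ha
    obtain ⟨ν, hν⟩ := dgz_exists_smul hv ha
    have hν0 : ν ≠ 0 := by
      rintro rfl
      have := congrFun hν m
      rw [zero_smul] at this
      exact hm (eq_zero_of_pow_eq_zero this)
    obtain ⟨u, hu⟩ := dgz_exists_generic (p := p) (n := n) hn hv
    apply dgz_rational_point hq hν0 hν hu (hE u)
    have e := comp_aeval_apply (dgzLine v u)
      ((Polynomial.aeval (0 : AlgebraicClosure (GaloisField p n))).restrictScalars
        (GaloisField p n)) F
    have e' : (fun i => ((Polynomial.aeval (0 : AlgebraicClosure (GaloisField p n))).restrictScalars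
        (GaloisField p n)) (dgzLine v u i)) = v := by
      funext i
      rw [AlgHom.restrictScalars_apply, Polynomial.coe_aeval_eq_eval]
      simp only [dgzLine, dgzConst, Pi.add_apply, Pi.smul_apply, smul_eq_mul,
        Polynomial.eval_add, Polynomial.eval_C, Polynomial.eval_mul, Polynomial.eval_X, zero_mul,
        add_zero]
    rw [e', hF0] at e
    rwa [AlgHom.restrictScalars_apply, Polynomial.coe_aeval_eq_eval] at e
  -- The line joining `[v]` to its Frobenius conjugate has coefficient vector `v ⨯₃ v ^ q`, which
  -- Frobenius multiplies by a scalar.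
  have haq : (v ⨯₃ (v ^ p ^ n)) ^ p ^ n = -μ • (v ⨯₃ (v ^ p ^ n)) := by
    rw [dgz_cross_pow, ← pow_mul, ← pow_two, hμv, LinearMap.map_smul, neg_smul, ← smul_neg,
      cross_anticomm]
  have hva : v ⬝ᵥ (v ⨯₃ (v ^ p ^ n)) = 0 := dot_self_cross _ _
  generalize hadef : v ⨯₃ (v ^ p ^ n) = a at ha haq hva
  obtain ⟨i, hi⟩ := Function.ne_iff.mp ha
  have hfrob : ∀ x : Fin 3 → AlgebraicClosure (GaloisField p n),
      (x ⬝ᵥ a) ^ p ^ n = -μ * ((x ^ p ^ n) ⬝ᵥ a) := by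
    intro x
    rw [dgz_dot_pow, haq, dotProduct_smul, smul_eq_mul]
  by_cases hwa : w ⬝ᵥ a = 0
  · have hmult : (DGZ_lineRestriction p n F v w).rootMultiplicity 0 = p ^ n := by
      have hiter : ∀ x : Fin 3 → AlgebraicClosure (GaloisField p n), x ⬝ᵥ a = 0 →
          ∀ k, (x ^ (p ^ n) ^ k) ⬝ᵥ a = 0 := by
        intro x hx k
        induction k with
        | zero => simpa using hx
        | succ k ih =>
          have := hfrob (x ^ (p ^ n) ^ k)
          rw [ih, zero_pow hq0, ← pow_mul, ← pow_succ] at this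
          exact (mul_eq_zero.mp this.symm).resolve_left (neg_ne_zero.mpr hμ)
      have hline : ∀ k, (dgzLine v w ^ (p ^ n) ^ k) ⬝ᵥ dgzConst a = 0 := by
        intro k
        rw [dgz_line_pow, add_dotProduct, smul_dotProduct, dgz_const_dot, dgz_const_dot,
          hiter v hva, hiter w hwa]
        simp
      have hD2 : dgzLine v w ⬝ᵥ ((dgzLine v w ^ p ^ n) ⨯₃ (dgzLine v w ^ (p ^ n) ^ 2)) = 0 :=
        dgz_triple_eq_zero (a := dgzConst a) (i := i) (by simpa [dgzConst] using hi)
          (by simpa using hline 0) (by simpa using hline 1) (hline 2)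
      have h := dgz_eval_pderiv p n hn F hF (dgzLine v w) i
      rw [hD2, zero_mul, add_zero] at h
      have hwv : (w ⨯₃ v) i ≠ 0 := by
        intro h0
        have hpar : a ⨯₃ (w ⨯₃ v) = 0 := by
          rw [cross_cross_eq_smul_sub_smul', dotProduct_comm a v, hva, hwa]
          simp
        obtain ⟨c, hc⟩ := dgz_exists_smul ha hpar
        have hc0 : c = 0 := by
          rw [hc, Pi.smul_apply, smul_eq_mul] at h0
          exact (mul_eq_zero.mp h0).resolve_right hi
        apply hw
        apply dgz_exists_smul hv
        rw [← cross_anticomm, hc, hc0]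
        simp
      rw [hres]
      exact dgz_tangent hq hμ hμv (by rw [hadef]; exact hi) hwv h
    refine ⟨Or.inr hmult, fun _ => ?_⟩
    have hb : ∀ j, ∃ b : GaloisField p n,
        algebraMap _ (AlgebraicClosure (GaloisField p n)) b = a j / a i := by
      intro j
      apply dgz_mem_range hn
      have hj := congrFun haq j
      have hi' := congrFun haq i
      rw [Pi.pow_apply, Pi.smul_apply, smul_eq_mul] at hj hi'
      rw [div_pow, hj, hi', mul_div_mul_left _ _ (neg_ne_zero.mpr hμ)]
    choose b hb using hb
    have hsum : ∀ x : Fin 3 → AlgebraicClosure (GaloisField p n), x ⬝ᵥ a = 0 →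
        ∑ j, algebraMap _ (AlgebraicClosure (GaloisField p n)) (b j) * x j = 0 := by
      intro x hx
      have : ∑ j, algebraMap _ (AlgebraicClosure (GaloisField p n)) (b j) * x j =
          (x ⬝ᵥ a) / a i := by
        rw [dotProduct, Finset.sum_div]
        refine Finset.sum_congr rfl fun j _ => ?_
        rw [hb]; ring
      rw [this, hx, zero_div]
    refine ⟨b, ?_, hsum v hva, hsum w hwa⟩
    rintro rfl
    have := hb i
    rw [div_self hi] at this
    simp at this
  · have hwa' : (w ^ p ^ n) ⬝ᵥ a ≠ 0 := by
      intro h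
      have := hfrob w
      rw [h, mul_zero] at this
      exact hwa (eq_zero_of_pow_eq_zero this)
    have hmult : (DGZ_lineRestriction p n F v w).rootMultiplicity 0 = p ^ n - 1 := by
      rw [hres]
      exact dgz_transversal hq hμ hμv (by rwa [hadef]) (by rwa [hadef]) (hE w)
    exact ⟨Or.inl hmult, fun h => by omega⟩
end

section
/- Let q > 2 be a prime power, k = 𝔽̄_q, and let F ∈ 𝔽_q[x,y,z] be the defining polynomial of the Dickson–Guralnick–Zieve curve C. Let Q be a nonsingular point of C and let T_Q be the tangent line to C at Q (the line defined by the gradient of F at Q). Then the intersection multiplicity ord_Q T_Q of T_Q with C at Q (the order of vanishing at the parameter of Q of the one-variable polynomial obtained by substituting a linear parametrization of T_Q into F) satisfies ord_Q T_Q ≥ q. -/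
/-!
Write `a₁ = a^q`, `a₂ = a^(q²)`, `a₃ = a^(q³)` for coordinatewise powers of a vector `a`, and
`[a, b, c]` for the triple product. Since `t ↦ t^q` is additive, along a line through `v` one has
`D₂(v + t u) = [v + t u, v₁ + t^q u₁, v₂ + t^(q²) u₂]`, and `D₁(v + t u)` is the same with
`v₃ + t^(q³) u₃` in the last slot; these are the polynomials `moorePoly`. Let `L u` be the
restriction of `F` to this line, so that `D₂(v + t u) * L u = D₁(v + t u)`, `L u` vanishes at `0`,
and its derivative at `0` is the derivative of `F` at `v` along `u`.

If `D₂(v) ≠ 0`, tangency gives `t² ∣ L w`, hence `t² ∣ D₁(v + t w)`, i.e. the two triple products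
`[v, v₁, v₃]` and `[w, v₁, v₃]` vanish. By `moorePoly_eq`, `D₁(v + t w)` is then divisible by
`t^q`, and so is `L w`, because `D₂(v + t w)` is prime to `t`. The multiplicity of a root of the
zero polynomial is `0` by convention, so `L w ≠ 0` is needed as well: if the curve contained the
tangent line, all eight triple products in the expansion of `D₁` would vanish, the line would be
stable under Frobenius, and `v, v₁, v₂` would be coplanar
(`moore_eq_zero_of_moorePoly_eq_zero`), that is, `D₂(v) = 0`.

If `D₂(v) = 0`, then `v` is not a nonsingular point of the curve. When `v` and `v₁` are
proportional, both determinants are `t^(q+1)` times a polynomial whose constant term is, for a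
suitable `u`, nonzero, so `F(v) ≠ 0` (`moorePoly_eq_of_smul`, `exists_triple_ne_zero`). Otherwise
`F(v) = 0` forces `t^q ∣ D₁(v + t u)` for all `u`, while `D₂(v + t u)` vanishes only to order one
if `[u, v₁, v₂] ≠ 0`. Thus `t^(q-1) ∣ L u`, and as `q > 2` the derivative along `u` is zero for
all `u` outside a plane, which makes the gradient vanish.
-/


open MvPolynomial

open Matrix

/-! ### Cross products, Frobenius, and restriction to a line -/

section Aux

variable {K : Type*} [Field K]

theorem cross_eq_zero_imp {a b : Fin 3 → K} (ha : a ≠ 0) (h : crossProduct a b = 0) :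
    ∃ c : K, b = c • a := by
  obtain ⟨i, hi⟩ := Function.ne_iff.mp ha
  have h0 := congrFun h 0
  have h1 := congrFun h 1
  have h2 := congrFun h 2
  simp only [cross_apply, Matrix.cons_val_zero, Matrix.cons_val_one, Matrix.cons_val,
    Pi.zero_apply] at h0 h1 h2 hi
  refine ⟨b i / a i, funext fun j => ?_⟩
  simp only [Pi.smul_apply, smul_eq_mul]
  field_simp
  fin_cases i <;> fin_cases j <;> simp only [Fin.zero_eta, Fin.mk_one, Fin.reduceFinMk] <;> grind

/-- Frobenius commutes with the cross product. -/
theorem cross_pow (p n : ℕ) [Fact p.Prime] [CharP K p] (m : ℕ) (a b : Fin 3 → K) :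
    crossProduct (a ^ (p ^ n) ^ m) (b ^ (p ^ n) ^ m) = (crossProduct a b) ^ (p ^ n) ^ m := by
  ext i
  fin_cases i <;> simp [cross_apply, ← pow_mul, sub_pow_char_pow, mul_pow]

theorem line_det_expand (a₁ a₂ b₁ b₂ c₁ c₂ : Fin 3 → K) (Y Z : Polynomial K) :
    Matrix.det (Matrix.of fun i j : Fin 3 =>
      (![Polynomial.C (a₁ i) + Polynomial.C (a₂ i) * Polynomial.X,
        Polynomial.C (b₁ i) + Polynomial.C (b₂ i) * Y,
        Polynomial.C (c₁ i) + Polynomial.C (c₂ i) * Z] j)) =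
      Polynomial.C (a₁ ⬝ᵥ crossProduct b₁ c₁) + Polynomial.C (a₂ ⬝ᵥ crossProduct b₁ c₁) * Polynomial.X
      + Polynomial.C (a₁ ⬝ᵥ crossProduct b₂ c₁) * Y + Polynomial.C (a₂ ⬝ᵥ crossProduct b₂ c₁) * Polynomial.X * Y
      + (Polynomial.C (a₁ ⬝ᵥ crossProduct b₁ c₂) + Polynomial.C (a₂ ⬝ᵥ crossProduct b₁ c₂) * Polynomial.X
      + Polynomial.C (a₁ ⬝ᵥ crossProduct b₂ c₂) * Y + Polynomial.C (a₂ ⬝ᵥ crossProduct b₂ c₂) * Polynomial.X * Y) * Z := by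
  simp only [Matrix.det_fin_three, Matrix.of_apply, vec3_dotProduct, cross_apply,
    Matrix.cons_val_zero, Matrix.cons_val_one, Matrix.cons_val, map_add, map_sub, map_mul]
  ring

theorem eval_line (G : MvPolynomial (Fin 3) K) (v w : Fin 3 → K) :
    (MvPolynomial.aeval (fun i : Fin 3 =>
      Polynomial.C (v i) + Polynomial.C (w i) * Polynomial.X) G).eval 0 =
      MvPolynomial.eval v G := by
  induction G using MvPolynomial.induction_on with
  | C a => simp
  | add p q hp hq => simp [hp, hq]
  | mul_X p i hp => simp [hp]

/-- The chain rule along a line. -/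
theorem derivative_line (G : MvPolynomial (Fin 3) K) (v w : Fin 3 → K) :
    (Polynomial.derivative (MvPolynomial.aeval (fun i : Fin 3 =>
      Polynomial.C (v i) + Polynomial.C (w i) * Polynomial.X) G)).eval 0 =
      ∑ i, MvPolynomial.eval v (MvPolynomial.pderiv i G) * w i := by
  induction G using MvPolynomial.induction_on with
  | C a => simp
  | add p q hp hq => simp [hp, hq, add_mul, Finset.sum_add_distrib]
  | mul_X p i hp =>
    simp [hp, eval_line, Fin.sum_univ_three, MvPolynomial.pderiv_X, Pi.single_apply]
    fin_cases i <;> simp <;> ring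

/-- The polynomial `det (v + t w, v' + t^q w', v₃ + t^N w₃)` in `t`, expanded multilinearly into
triple products; here `v' = v^q` and `v₃ = v^N` are coordinatewise powers. -/
noncomputable def moorePoly (q N : ℕ) (v w : Fin 3 → K) : Polynomial K :=
  Polynomial.C (v ⬝ᵥ crossProduct (v ^ q) (v ^ N))
    + Polynomial.C (w ⬝ᵥ crossProduct (v ^ q) (v ^ N)) * Polynomial.X
    + Polynomial.C (v ⬝ᵥ crossProduct (w ^ q) (v ^ N)) * Polynomial.X ^ q
    + Polynomial.C (w ⬝ᵥ crossProduct (w ^ q) (v ^ N)) * Polynomial.X * Polynomial.X ^ q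
    + (Polynomial.C (v ⬝ᵥ crossProduct (v ^ q) (w ^ N))
      + Polynomial.C (w ⬝ᵥ crossProduct (v ^ q) (w ^ N)) * Polynomial.X
      + Polynomial.C (v ⬝ᵥ crossProduct (w ^ q) (w ^ N)) * Polynomial.X ^ q
      + Polynomial.C (w ⬝ᵥ crossProduct (w ^ q) (w ^ N)) * Polynomial.X * Polynomial.X ^ q)
      * Polynomial.X ^ N

/-- The exponents `0, 1, q, q + 1, N, N + 1, N + q, N + q + 1` are pairwise distinct, so each
coefficient can be read off. -/
theorem coeffs_eq_zero {q N : ℕ} (hq : 2 ≤ q) (hN : q + 1 < N) {a b c d e f g h : K}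
    (H : Polynomial.C a + Polynomial.C b * Polynomial.X + Polynomial.C c * Polynomial.X ^ q
      + Polynomial.C d * Polynomial.X * Polynomial.X ^ q
      + (Polynomial.C e + Polynomial.C f * Polynomial.X + Polynomial.C g * Polynomial.X ^ q
      + Polynomial.C h * Polynomial.X * Polynomial.X ^ q) * Polynomial.X ^ N = 0) :
    a = 0 ∧ b = 0 ∧ c = 0 ∧ d = 0 ∧ e = 0 ∧ f = 0 ∧ g = 0 ∧ h = 0 := by
  have key : ∀ k, (Polynomial.C a * Polynomial.X ^ 0 + Polynomial.C b * Polynomial.X ^ 1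
      + Polynomial.C c * Polynomial.X ^ q + Polynomial.C d * Polynomial.X ^ (q + 1)
      + Polynomial.C e * Polynomial.X ^ N + Polynomial.C f * Polynomial.X ^ (N + 1)
      + Polynomial.C g * Polynomial.X ^ (N + q)
      + Polynomial.C h * Polynomial.X ^ (N + q + 1)).coeff k = 0 := by
    intro k
    have := congrArg (fun P => Polynomial.coeff P k) H
    simp only [Polynomial.coeff_zero] at this
    rw [← this]
    congr 1
    ring
  simp only [Polynomial.coeff_add, Polynomial.coeff_C_mul_X_pow] at key
  have k0 := key 0
  have k1 := key 1
  have k2 := key q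
  have k3 := key (q + 1)
  have k4 := key N
  have k5 := key (N + 1)
  have k6 := key (N + q)
  have k7 := key (N + q + 1)
  refine ⟨?_, ?_, ?_, ?_, ?_, ?_, ?_, ?_⟩
  · rw [if_pos rfl, if_neg (by omega), if_neg (by omega), if_neg (by omega), if_neg (by omega),
      if_neg (by omega), if_neg (by omega), if_neg (by omega)] at k0
    simpa using k0
  · rw [if_neg (by omega), if_pos rfl, if_neg (by omega), if_neg (by omega), if_neg (by omega),
      if_neg (by omega), if_neg (by omega), if_neg (by omega)] at k1
    simpa using k1
  · rw [if_neg (by omega), if_neg (by omega), if_pos rfl, if_neg (by omega), if_neg (by omega),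
      if_neg (by omega), if_neg (by omega), if_neg (by omega)] at k2
    simpa using k2
  · rw [if_neg (by omega), if_neg (by omega), if_neg (by omega), if_pos rfl, if_neg (by omega),
      if_neg (by omega), if_neg (by omega), if_neg (by omega)] at k3
    simpa using k3
  · rw [if_neg (by omega), if_neg (by omega), if_neg (by omega), if_neg (by omega), if_pos rfl,
      if_neg (by omega), if_neg (by omega), if_neg (by omega)] at k4
    simpa using k4
  · rw [if_neg (by omega), if_neg (by omega), if_neg (by omega), if_neg (by omega),
      if_neg (by omega), if_pos rfl, if_neg (by omega), if_neg (by omega)] at k5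
    simpa using k5
  · rw [if_neg (by omega), if_neg (by omega), if_neg (by omega), if_neg (by omega),
      if_neg (by omega), if_neg (by omega), if_pos rfl, if_neg (by omega)] at k6
    simpa using k6
  · rw [if_neg (by omega), if_neg (by omega), if_neg (by omega), if_neg (by omega),
      if_neg (by omega), if_neg (by omega), if_neg (by omega), if_pos rfl] at k7
    simpa using k7

/-- Modulo `t^q` only the two triple products with first factor `v` or `w` survive. -/
theorem moorePoly_eq {q N : ℕ} (hN : q ≤ N) (v w : Fin 3 → K) : ∃ R : Polynomial K,
    moorePoly q N v w = Polynomial.C (v ⬝ᵥ crossProduct (v ^ q) (v ^ N))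
      + Polynomial.C (w ⬝ᵥ crossProduct (v ^ q) (v ^ N)) * Polynomial.X
      + Polynomial.X ^ q * R := by
  obtain ⟨d, rfl⟩ := Nat.exists_eq_add_of_le hN
  refine ⟨Polynomial.C (v ⬝ᵥ crossProduct (w ^ q) (v ^ (q + d)))
    + Polynomial.C (w ⬝ᵥ crossProduct (w ^ q) (v ^ (q + d))) * Polynomial.X
    + (Polynomial.C (v ⬝ᵥ crossProduct (v ^ q) (w ^ (q + d)))
      + Polynomial.C (w ⬝ᵥ crossProduct (v ^ q) (w ^ (q + d))) * Polynomial.X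
      + Polynomial.C (v ⬝ᵥ crossProduct (w ^ q) (w ^ (q + d))) * Polynomial.X ^ q
      + Polynomial.C (w ⬝ᵥ crossProduct (w ^ q) (w ^ (q + d))) * Polynomial.X * Polynomial.X ^ q)
      * Polynomial.X ^ d, ?_⟩
  rw [moorePoly]
  ring

/-! ### Lines on which `D₁` vanishes -/

/-- In dimension three, a vector orthogonal to `a` and `b` is a multiple of the normal `a × b`. -/
theorem exists_smul_cross {a b x : Fin 3 → K} (hab : crossProduct a b ≠ 0)
    (ha : a ⬝ᵥ x = 0) (hb : b ⬝ᵥ x = 0) : ∃ c : K, x = c • crossProduct a b := by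
  apply cross_eq_zero_imp hab
  rw [cross_cross_eq_smul_sub_smul, ha, hb]
  simp

/-- If the plane of `v, w` is orthogonal to `b × c₁` and `b × c₂`, with `c₁, c₂` independent, then
`b` lies in that plane: otherwise `b × cᵢ`, being both a multiple of the normal `v × w` and
orthogonal to `b`, would be zero, and `c₁, c₂` would both be multiples of `b`. -/
theorem orth_of_triples {v w b c₁ c₂ : Fin 3 → K} (hb : b ≠ 0) (hvw : crossProduct v w ≠ 0)
    (hc : crossProduct c₁ c₂ ≠ 0)
    (h1 : v ⬝ᵥ crossProduct b c₁ = 0) (h2 : w ⬝ᵥ crossProduct b c₁ = 0)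
    (h3 : v ⬝ᵥ crossProduct b c₂ = 0) (h4 : w ⬝ᵥ crossProduct b c₂ = 0) :
    crossProduct v w ⬝ᵥ b = 0 := by
  obtain ⟨s, hs⟩ := exists_smul_cross hvw h1 h2
  obtain ⟨t, ht⟩ := exists_smul_cross hvw h3 h4
  by_contra hne
  have e1 : s * (crossProduct v w ⬝ᵥ b) = 0 := by
    rw [← smul_eq_mul, ← smul_dotProduct, ← hs, dotProduct_comm, dot_self_cross]
  have e2 : t * (crossProduct v w ⬝ᵥ b) = 0 := by
    rw [← smul_eq_mul, ← smul_dotProduct, ← ht, dotProduct_comm, dot_self_cross]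
  have s0 : s = 0 := by simpa [hne] using e1
  have t0 : t = 0 := by simpa [hne] using e2
  obtain ⟨x, rfl⟩ := cross_eq_zero_imp hb (by rw [hs, s0, zero_smul])
  obtain ⟨y, rfl⟩ := cross_eq_zero_imp hb (by rw [ht, t0, zero_smul])
  simp at hc

theorem ne_zero_of_cross_left {a b : Fin 3 → K} (h : crossProduct a b ≠ 0) : a ≠ 0 := by
  rintro rfl
  simp at h

theorem ne_zero_of_cross_right {a b : Fin 3 → K} (h : crossProduct a b ≠ 0) : b ≠ 0 := by
  rintro rfl
  simp at h

theorem vec_pow_ne_zero {a : Fin 3 → K} (ha : a ≠ 0) (N : ℕ) : a ^ N ≠ 0 := pow_ne_zero N ha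

theorem dot_pow (p n : ℕ) [Fact p.Prime] [CharP K p] (a b : Fin 3 → K) :
    (a ^ p ^ n) ⬝ᵥ (b ^ p ^ n) = (a ⬝ᵥ b) ^ p ^ n := by
  simp [vec3_dotProduct, add_pow_char_pow, mul_pow]

/-- If `D₁` vanishes on the line through `v` and `w`, then this line is stable under Frobenius, so
that `v, v^q, v^(q²)` are coplanar. -/
theorem moore_eq_zero_of_moorePoly_eq_zero (p n : ℕ) [Fact p.Prime] [CharP K p]
    (hq : 2 < p ^ n) {v w : Fin 3 → K} (hvw : crossProduct v w ≠ 0)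
    (h : moorePoly (p ^ n) ((p ^ n) ^ 3) v w = 0) :
    v ⬝ᵥ crossProduct (v ^ p ^ n) (v ^ (p ^ n) ^ 2) = 0 := by
  have hN : p ^ n + 1 < (p ^ n) ^ 3 := by nlinarith [sq_nonneg (p ^ n), Nat.mul_le_mul hq.le hq.le]
  obtain ⟨h1, h2, h3, h4, h5, h6, h7, h8⟩ := coeffs_eq_zero hq.le hN h
  have hc : crossProduct (v ^ (p ^ n) ^ 3) (w ^ (p ^ n) ^ 3) ≠ 0 := by
    rw [cross_pow]
    exact vec_pow_ne_zero hvw _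
  -- `v^q` and `w^q` lie in the plane of `v` and `w`
  have o1 := orth_of_triples (vec_pow_ne_zero (ne_zero_of_cross_left hvw) _) hvw hc h1 h2 h5 h6
  have o2 := orth_of_triples (vec_pow_ne_zero (ne_zero_of_cross_right hvw) _) hvw hc h3 h4 h7 h8
  -- the normal vector of the line is proportional to its Frobenius conjugate
  have hl : crossProduct (v ^ p ^ n) (w ^ p ^ n) = (crossProduct v w) ^ p ^ n := by
    simpa using cross_pow p n 1 v w
  have hpar : crossProduct (crossProduct v w) ((crossProduct v w) ^ p ^ n) = 0 := by
    rw [← hl, cross_cross_eq_smul_sub_smul', o2, dotProduct_comm _ (crossProduct v w), o1]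
    simp
  obtain ⟨μ, hμ⟩ := cross_eq_zero_imp hvw hpar
  have hμ0 : μ ≠ 0 := by
    rintro rfl
    exact vec_pow_ne_zero hvw _ (by rw [hμ, zero_smul])
  have o3 : crossProduct v w ⬝ᵥ v ^ (p ^ n) ^ 2 = 0 := by
    have := dot_pow p n (crossProduct v w) (v ^ p ^ n)
    rw [o1, hμ, smul_dotProduct, ← pow_mul, ← sq, zero_pow (by omega)] at this
    simpa [hμ0] using this
  have : crossProduct (crossProduct v w) (crossProduct (v ^ p ^ n) (v ^ (p ^ n) ^ 2)) = 0 := by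
    rw [cross_cross_eq_smul_sub_smul', o3, dotProduct_comm _ (crossProduct v w), o1]
    simp
  obtain ⟨c, hc⟩ := cross_eq_zero_imp hvw this
  rw [hc, dotProduct_smul, dot_self_cross, smul_zero]

/-! ### The local argument -/

/-- If `v` is proportional to `v^q` and to `v^N`, the expansion starts at `t^(q+1)`. -/
theorem moorePoly_eq_of_smul {q N : ℕ} (hN : q + 2 ≤ N) (v w : Fin 3 → K) {μ ν : K}
    (h1 : v ^ q = μ • v) (h2 : v ^ N = ν • v) : ∃ R : Polynomial K,
    moorePoly q N v w = Polynomial.X ^ (q + 1)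
      * (Polynomial.C (ν * (w ⬝ᵥ crossProduct (w ^ q) v)) + Polynomial.X * R) := by
  obtain ⟨d, rfl⟩ := Nat.exists_eq_add_of_le hN
  refine ⟨(Polynomial.C (v ⬝ᵥ crossProduct (v ^ q) (w ^ (q + 2 + d)))
      + Polynomial.C (w ⬝ᵥ crossProduct (v ^ q) (w ^ (q + 2 + d))) * Polynomial.X
      + Polynomial.C (v ⬝ᵥ crossProduct (w ^ q) (w ^ (q + 2 + d))) * Polynomial.X ^ q
      + Polynomial.C (w ⬝ᵥ crossProduct (w ^ q) (w ^ (q + 2 + d))) * Polynomial.X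
        * Polynomial.X ^ q) * Polynomial.X ^ d, ?_⟩
  have e1 : v ⬝ᵥ crossProduct (v ^ q) (v ^ (q + 2 + d)) = 0 := by
    simp [h1, h2]
  have e2 : w ⬝ᵥ crossProduct (v ^ q) (v ^ (q + 2 + d)) = 0 := by
    simp [h1, h2]
  have e3 : v ⬝ᵥ crossProduct (w ^ q) (v ^ (q + 2 + d)) = 0 := by
    simp [h2]
  have e4 : w ⬝ᵥ crossProduct (w ^ q) (v ^ (q + 2 + d)) = ν * (w ⬝ᵥ crossProduct (w ^ q) v) := by
    simp [h2]
  rw [moorePoly, e1, e2, e3, e4]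
  simp only [map_zero]
  ring

/-- The witness `u` is supported off a nonzero coordinate of `v` and has entries `0`, `1` and an
element `θ` satisfying `θ^q ≠ θ`. -/
theorem exists_triple_ne_zero [Infinite K] {q : ℕ} (hq : 2 ≤ q) {v : Fin 3 → K} (hv : v ≠ 0) :
    ∃ u : Fin 3 → K, u ⬝ᵥ crossProduct (u ^ q) v ≠ 0 := by
  obtain ⟨θ, hθ⟩ : ∃ θ : K, θ ^ q - θ ≠ 0 := by
    by_contra! hcon
    have : (Polynomial.X ^ q - Polynomial.X : Polynomial K) = 0 := by
      apply Polynomial.funext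
      intro x
      simpa using hcon x
    have h2 := congrArg (fun P => Polynomial.coeff P 1) this
    simp [Polynomial.coeff_X_pow, show 1 ≠ q by omega] at h2
  have hq0 : q ≠ 0 := by omega
  obtain ⟨i, hi⟩ := Function.ne_iff.mp hv
  fin_cases i
  · refine ⟨![0, 1, θ], fun h => mul_ne_zero hθ hi ?_⟩
    simp [cross_apply, hq0] at h ⊢
    grind
  · refine ⟨![1, 0, θ], fun h => mul_ne_zero hθ hi ?_⟩
    simp [cross_apply, hq0] at h ⊢
    grind
  · refine ⟨![1, θ, 0], fun h => mul_ne_zero hθ hi ?_⟩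
    simp [cross_apply, hq0] at h ⊢
    grind

/-- A product of two nonzero linear forms is not the zero function. -/
theorem linear_forms {a b : Fin 3 → K} (h : ∀ u : Fin 3 → K, (a ⬝ᵥ u) * (b ⬝ᵥ u) = 0)
    (ha : a ≠ 0) : b = 0 := by
  obtain ⟨i, hi⟩ := Function.ne_iff.mp ha
  by_contra hb
  obtain ⟨j, hj⟩ := Function.ne_iff.mp hb
  have h1 := h (Pi.single i 1)
  have h2 := h (Pi.single j 1)
  have h3 := h (Pi.single i 1 + Pi.single j 1)
  simp [dotProduct_add] at h1 h2 h3 hi hj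
  grind

theorem X_sq_dvd {P : Polynomial K} (h0 : P.eval 0 = 0) (h1 : P.derivative.eval 0 = 0) :
    Polynomial.X ^ 2 ∣ P := by
  rw [Polynomial.X_pow_dvd_iff]
  intro d hd
  rw [← Polynomial.coeff_zero_eq_eval_zero] at h0 h1
  rw [Polynomial.coeff_derivative] at h1
  interval_cases d
  · exact h0
  · simpa using h1

theorem eq_zero_of_X_dvd_C_add {a : K} {R : Polynomial K} {m : ℕ} (hm : m ≠ 0)
    (h : Polynomial.X ∣ Polynomial.C a + Polynomial.X ^ m * R) : a = 0 := by
  rw [Polynomial.X_dvd_iff] at h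
  simpa [Polynomial.coeff_zero_eq_eval_zero, hm] using h

theorem coeffs_of_X_sq_dvd {q : ℕ} (hq : 2 ≤ q) {a b : K} {R : Polynomial K}
    (h : Polynomial.X ^ 2 ∣ Polynomial.C a + Polynomial.C b * Polynomial.X + Polynomial.X ^ q * R) :
    a = 0 ∧ b = 0 := by
  rw [Polynomial.X_pow_dvd_iff] at h
  have h0 := h 0 (by omega)
  have h1 := h 1 (by omega)
  simp [Polynomial.coeff_X_pow_mul', show 0 ≠ q by omega, show ¬ q ≤ 1 by omega,
    Polynomial.coeff_C] at h0 h1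
  exact ⟨h0, h1⟩

/-- The polynomial `L u` plays the role of the restriction of `F` to the line through `v` in
direction `u`, and `grad` that of the gradient of `F` at `v`. -/
theorem dgz_core (p n : ℕ) [Fact p.Prime] [CharP K p] [Infinite K] (hq : 2 < p ^ n)
    (v : Fin 3 → K) (hv : v ≠ 0) (grad : Fin 3 → K) (hgrad : grad ≠ 0)
    (L : (Fin 3 → K) → Polynomial K)
    (hL : ∀ u, moorePoly (p ^ n) ((p ^ n) ^ 2) v u * L u = moorePoly (p ^ n) ((p ^ n) ^ 3) v u)
    (hL0 : ∀ u, (L u).eval 0 = 0) (hL1 : ∀ u, (L u).derivative.eval 0 = grad ⬝ᵥ u)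
    (w : Fin 3 → K) (hw : crossProduct v w ≠ 0) (hgw : grad ⬝ᵥ w = 0) :
    p ^ n ≤ (L w).rootMultiplicity 0 := by
  obtain ⟨q, hqdef⟩ : ∃ q, q = p ^ n := ⟨_, rfl⟩
  rw [← hqdef] at hq hL ⊢
  have hq2 : q + 2 ≤ q ^ 2 := by nlinarith
  have hq3 : q + 2 ≤ q ^ 3 := by nlinarith [Nat.mul_le_mul hq.le hq.le]
  have hXL : ∀ u, Polynomial.X ∣ L u := fun u => by
    rw [Polynomial.X_dvd_iff, Polynomial.coeff_zero_eq_eval_zero, hL0]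
  by_cases hD : v ⬝ᵥ crossProduct (v ^ q) (v ^ q ^ 2) = 0
  · exfalso
    by_cases hvv : crossProduct v (v ^ q) = 0
    · obtain ⟨μ, hμ⟩ := cross_eq_zero_imp hv hvv
      have hμ0 : μ ≠ 0 := by
        rintro rfl
        exact vec_pow_ne_zero hv q (by rw [hμ, zero_smul])
      have h2 : v ^ q ^ 2 = (μ ^ q * μ) • v := by
        rw [sq, pow_mul, hμ, smul_pow, hμ, smul_smul]
      have h3 : v ^ q ^ 3 = (μ ^ q ^ 2 * μ ^ q * μ) • v := by
        rw [pow_succ q 2, mul_comm, pow_mul, hμ, smul_pow, h2, smul_smul, mul_assoc]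
      -- after cancelling `t^(q+1)`, `t ∣ L u` forces the constant term on the `D₁` side to vanish
      obtain ⟨u, hu⟩ := exists_triple_ne_zero hq.le hv
      obtain ⟨R₂, hR₂⟩ := moorePoly_eq_of_smul hq2 v u hμ h2
      obtain ⟨R₃, hR₃⟩ := moorePoly_eq_of_smul hq3 v u hμ h3
      have h := hL u
      rw [hR₂, hR₃, mul_assoc] at h
      have h' := mul_left_cancel₀ (pow_ne_zero _ Polynomial.X_ne_zero) h
      have hd := Dvd.dvd.mul_left (hXL u)
        (Polynomial.C (μ ^ q * μ * (u ⬝ᵥ crossProduct (u ^ q) v)) + Polynomial.X * R₂)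
      rw [h', Polynomial.X_dvd_iff, Polynomial.coeff_add, Polynomial.coeff_C_zero,
        Polynomial.coeff_X_mul_zero, add_zero] at hd
      simp [hμ0, hu] at hd
    · have hvv' : crossProduct (v ^ q) (v ^ q ^ 2) ≠ 0 := by
        have := cross_pow p n 1 v (v ^ q)
        rw [← hqdef, pow_one, ← pow_mul, ← sq] at this
        rw [this]
        exact vec_pow_ne_zero hvv _
      -- the derivative of `F` along `u` times `[u, v₁, v₂]` vanishes identically in `u`
      apply hvv'
      refine linear_forms (fun u => ?_) hgrad
      obtain ⟨R₂, hR₂⟩ := moorePoly_eq (show q ≤ q ^ 2 by omega) v u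
      obtain ⟨R₃, hR₃⟩ := moorePoly_eq (show q ≤ q ^ 3 by omega) v u
      have h := hL u
      obtain ⟨M, hM⟩ := hXL u
      obtain ⟨m, hm⟩ : ∃ m, q = m + 3 := ⟨q - 3, by omega⟩
      have hd : Polynomial.X ^ 2 ∣ moorePoly q (q ^ 3) v u := by
        rw [← h, hR₂, hD, hM, hm]
        exact ⟨(Polynomial.C (u ⬝ᵥ crossProduct (v ^ (m+3)) (v ^ (m+3) ^ 2))
          + Polynomial.X ^ (m + 2) * R₂) * M, by rw [map_zero]; ring⟩
      rw [hR₃] at hd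
      obtain ⟨a0, b0⟩ := coeffs_of_X_sq_dvd hq.le hd
      rw [hR₃, hR₂, hD, a0, b0] at h
      by_cases hb : u ⬝ᵥ crossProduct (v ^ q) (v ^ q ^ 2) = 0
      · rw [dotProduct_comm _ u, dotProduct_comm _ u, hb, mul_zero]
      · have h' : (Polynomial.C (u ⬝ᵥ crossProduct (v ^ q) (v ^ q ^ 2))
            + Polynomial.X ^ (m + 2) * R₂) * L u = Polynomial.X ^ (m + 2) * R₃ := by
          apply mul_left_cancel₀ (Polynomial.X_ne_zero (R := K))
          rw [map_zero, zero_mul, zero_add, zero_add, zero_add] at h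
          have e : (Polynomial.X : Polynomial K) ^ q = Polynomial.X * Polynomial.X ^ (m + 2) := by
            rw [hm]; ring
          rw [e] at h
          linear_combination h
        have hdv : Polynomial.X ^ (m + 2) ∣ L u := by
          refine Polynomial.prime_X.pow_dvd_of_dvd_mul_left _ ?_ (Dvd.intro _ h'.symm)
          exact fun hc => hb (eq_zero_of_X_dvd_C_add (by omega) hc)
        -- `m + 2 = q - 1 ≥ 2`, so the derivative of `L u` vanishes at `0`
        obtain ⟨S, hS⟩ := hdv
        have := hL1 u
        rw [hS] at this
        simp [pow_succ] at this
        rw [← this, zero_mul]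
  · have hdvd := X_sq_dvd (hL0 w) ((hL1 w).trans hgw)
    have h := hL w
    obtain ⟨R₂, hR₂⟩ := moorePoly_eq (show q ≤ q ^ 2 by omega) v w
    obtain ⟨R₃, hR₃⟩ := moorePoly_eq (show q ≤ q ^ 3 by omega) v w
    have hd : Polynomial.X ^ 2 ∣ moorePoly q (q ^ 3) v w := h ▸ Dvd.dvd.mul_left hdvd _
    rw [hR₃] at hd
    obtain ⟨a0, b0⟩ := coeffs_of_X_sq_dvd hq.le hd
    -- the zero polynomial has `rootMultiplicity` equal to `0`
    have hne : L w ≠ 0 := by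
      intro h0
      rw [h0, mul_zero] at h
      subst hqdef
      exact hD (moore_eq_zero_of_moorePoly_eq_zero p n hq hw h.symm)
    rw [Polynomial.le_rootMultiplicity_iff hne, Polynomial.C_0, sub_zero]
    rw [hR₃, a0, b0, map_zero, zero_mul, zero_add, zero_add] at h
    refine Polynomial.prime_X.pow_dvd_of_dvd_mul_left _ ?_ (Dvd.intro _ h.symm)
    rw [Polynomial.X_dvd_iff, hR₂]
    simpa [Polynomial.coeff_zero_eq_eval_zero, show q ≠ 0 by omega] using hD

end Aux

/-! ### The Dickson–Guralnick–Zieve curve -/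

/-- The determinants defining `D₂` (`m = 2`) and `D₁` (`m = 3`) restrict to `moorePoly`. -/
theorem lineRestriction_det (p n m : ℕ) [Fact p.Prime]
    (v w : Fin 3 → AlgebraicClosure (GaloisField p n)) :
    DGZ_lineRestriction p n (Matrix.det (Matrix.of fun i j : Fin 3 =>
      (X i : MvPolynomial (Fin 3) (GaloisField p n)) ^ (![1, p ^ n, (p ^ n) ^ m] j))) v w =
    moorePoly (p ^ n) ((p ^ n) ^ m) v w := by
  have : CharP (AlgebraicClosure (GaloisField p n)) p :=
    charP_of_injective_algebraMap (algebraMap (GaloisField p n) _).injective p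
  have hfrob : ∀ k (a b : AlgebraicClosure (GaloisField p n)),
      (Polynomial.C a + Polynomial.C b * Polynomial.X) ^ p ^ k
        = Polynomial.C (a ^ p ^ k) + Polynomial.C (b ^ p ^ k) * Polynomial.X ^ p ^ k := by
    intro k a b
    rw [add_pow_char_pow, mul_pow, ← Polynomial.C_pow, ← Polynomial.C_pow]
  rw [moorePoly, ← line_det_expand]
  simp only [DGZ_lineRestriction, DGZ_Fbar, Matrix.det_fin_three, Matrix.of_apply,
    Matrix.cons_val_zero, Matrix.cons_val_one, Matrix.cons_val, map_add, map_sub, map_mul, map_pow,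
    MvPolynomial.map_X, MvPolynomial.aeval_X, Pi.pow_apply, pow_one, ← pow_mul, hfrob]

/-- For `q > 2`, let `Q = [v]` be a nonsingular point of the DGZ curve and let `T_Q` be the
tangent line at `Q`, i.e. the line through `v` in a direction `w` (not proportional to `v`)
annihilated by the gradient of `F` at `v`.  Then `ord_Q T_Q ≥ q`. -/
theorem DGZ_tangent_multiplicity_at_nonsingular (p n : ℕ) [Fact p.Prime] (hn : 0 < n)
    (hq : 2 < p ^ n)
    (F : MvPolynomial (Fin 3) (GaloisField p n)) (hF : DGZ_D2 p n * F = DGZ_D1 p n)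
    (v : Fin 3 → AlgebraicClosure (GaloisField p n)) (hv : v ≠ 0)
    (hvC : MvPolynomial.eval v (DGZ_Fbar p n F) = 0)
    (hns : ∃ i : Fin 3, MvPolynomial.eval v (MvPolynomial.pderiv i (DGZ_Fbar p n F)) ≠ 0)
    (w : Fin 3 → AlgebraicClosure (GaloisField p n))
    (hw : ¬ ∃ c : AlgebraicClosure (GaloisField p n), w = c • v)
    (htangent : ∑ i : Fin 3,
      MvPolynomial.eval v (MvPolynomial.pderiv i (DGZ_Fbar p n F)) * w i = 0) :
    p ^ n ≤ (DGZ_lineRestriction p n F v w).rootMultiplicity 0 := by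
  have : CharP (AlgebraicClosure (GaloisField p n)) p :=
    charP_of_injective_algebraMap (algebraMap (GaloisField p n) _).injective p
  have : Infinite (AlgebraicClosure (GaloisField p n)) := IsAlgClosed.instInfinite
  refine dgz_core p n hq v hv
    (fun i => MvPolynomial.eval v (MvPolynomial.pderiv i (DGZ_Fbar p n F))) ?_
    (fun u => DGZ_lineRestriction p n F v u) ?_ ?_ ?_ w ?_ htangent
  · obtain ⟨i, hi⟩ := hns
    exact fun h => hi (congrFun h i)
  · intro u
    have h2 := lineRestriction_det p n 2 v u
    have h3 := lineRestriction_det p n 3 v u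
    rw [← h2, ← h3]
    have := congrArg (fun G => DGZ_lineRestriction p n G v u) hF
    simpa only [DGZ_lineRestriction, DGZ_Fbar, map_mul, DGZ_D1, DGZ_D2] using this
  · intro u
    exact (eval_line (DGZ_Fbar p n F) v u).trans hvC
  · intro u
    exact derivative_line (DGZ_Fbar p n F) v u
  · intro h
    exact hw (cross_eq_zero_imp hv h)
end
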